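/- Let ζ = (−1)^{p−1} 2p ([p−1]!)² and let μ : Ū_q → ℂ be the linear form determined on the PBW basis by μ(F^m E^n K^j) = ζ if (m, n, j) = (p−1, p−1, p+1) and 0 otherwise (0 ≤ m, n ≤ p−1, 0 ≤ j ≤ 2p−1); μ is a right integral of Ū_q. Then the symmetric linear form u ↦ μ(K^{p+1} u) has the following expansion in the GTA basis: μ(K^{p+1}·) = (−1)^{p−1} χ^+_p + χ^−_p + Σ_{s=1}^{p−1} [ (−1)^s (q^s + q^{−s}) χ^+_s + (−1)^{p−s−1} (q^s + q^{−s}) χ^−_s + (−1)^s [s]² G_s ]. -/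

import Mathlib

noncomputable section

open scoped TensorProduct

namespace Uqsl2

/-- Generators of the restricted quantum group. -/
inductive gen : Type | E | F | K | Kinv

/-- The primitive `2p`-th root of unity `q = e^{iπ/p}`. -/
def q (p : ℕ) : ℂ := Complex.exp (Real.pi * Complex.I / p)

/-- The `q`-integer `[n] = (q^n - q^{-n})/(q - q^{-1})`. -/
def qi (p : ℕ) (n : ℤ) : ℂ := (q p ^ n - q p ^ (-n)) / (q p - (q p)⁻¹)

/-- The `q`-factorial `[m]!`. -/
def qfact (p m : ℕ) : ℂ := ∏ i ∈ Finset.range m, qi p (i + 1)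

open FreeAlgebra in
/-- The defining relations of `Ū_q(sl₂)`. -/
inductive rel (p : ℕ) : FreeAlgebra ℂ gen → FreeAlgebra ℂ gen → Prop
  | KKinv : rel p (ι ℂ gen.K * ι ℂ gen.Kinv) 1
  | KinvK : rel p (ι ℂ gen.Kinv * ι ℂ gen.K) 1
  | Ep : rel p (ι ℂ gen.E ^ p) 0
  | Fp : rel p (ι ℂ gen.F ^ p) 0
  | K2p : rel p (ι ℂ gen.K ^ (2 * p)) 1
  | KE : rel p (ι ℂ gen.K * ι ℂ gen.E) (q p ^ 2 • (ι ℂ gen.E * ι ℂ gen.K))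
  | KF : rel p (ι ℂ gen.K * ι ℂ gen.F) ((q p ^ 2)⁻¹ • (ι ℂ gen.F * ι ℂ gen.K))
  | EF : rel p (ι ℂ gen.E * ι ℂ gen.F - ι ℂ gen.F * ι ℂ gen.E)
             ((q p - (q p)⁻¹)⁻¹ • (ι ℂ gen.K - ι ℂ gen.Kinv))

/-- The restricted quantum group `Ū_q(sl₂)`, presented by generators and relations. -/
abbrev Uq (p : ℕ) := RingQuot (rel p)

def EE (p : ℕ) : Uq p := RingQuot.mkAlgHom ℂ (rel p) (FreeAlgebra.ι ℂ gen.E)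
def FF (p : ℕ) : Uq p := RingQuot.mkAlgHom ℂ (rel p) (FreeAlgebra.ι ℂ gen.F)
def KK (p : ℕ) : Uq p := RingQuot.mkAlgHom ℂ (rel p) (FreeAlgebra.ι ℂ gen.K)
def KKinv (p : ℕ) : Uq p := RingQuot.mkAlgHom ℂ (rel p) (FreeAlgebra.ι ℂ gen.Kinv)

/-! ### The simple modules `X^α(s)` as matrix representations -/

/-- Matrix of `K` on `X^α(s)` in the canonical basis. -/
def XK (p : ℕ) (α : ℂ) (s : ℕ) : Matrix (Fin s) (Fin s) ℂ :=
  Matrix.diagonal fun i => α * q p ^ ((s : ℤ) - 1 - 2 * (i : ℕ))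

/-- Matrix of `E` on `X^α(s)` in the canonical basis. -/
def XE (p : ℕ) (α : ℂ) (s : ℕ) : Matrix (Fin s) (Fin s) ℂ :=
  Matrix.of fun i j =>
    if (i : ℕ) + 1 = (j : ℕ) then α * qi p (j : ℕ) * qi p ((s : ℤ) - (j : ℕ)) else 0

/-- Matrix of `F` on `X^α(s)` in the canonical basis. -/
def XF (s : ℕ) : Matrix (Fin s) (Fin s) ℂ :=
  Matrix.of fun i j => if (i : ℕ) = (j : ℕ) + 1 then (1 : ℂ) else 0

/-- The statement that `ρX α s` is the representation on `X^α(s)` for the relevant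
values of `α` and `s`. -/
def IsXRep (p : ℕ) (ρX : (α : ℂ) → (s : ℕ) → (Uq p →ₐ[ℂ] Matrix (Fin s) (Fin s) ℂ)) : Prop :=
  ∀ α : ℂ, (α = 1 ∨ α = -1) → ∀ s : ℕ, 1 ≤ s → s ≤ p →
    ρX α s (KK p) = XK p α s ∧ ρX α s (EE p) = XE p α s ∧ ρX α s (FF p) = XF s

/-! ### The projective modules `P^α(s)` as matrix representations -/

/-- Index for the standard basis `(b_i, x_j, y_k, a_l)` of `P^α(s)`. -/
abbrev PIdx (p s : ℕ) := Fin s ⊕ (Fin (p - s) ⊕ (Fin (p - s) ⊕ Fin s))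

/-- Diagonal of the matrix of `K` on `P^α(s)`. -/
def PKdiag (p : ℕ) (α : ℂ) (s : ℕ) : PIdx p s → ℂ
  | .inl i => α * q p ^ ((s : ℤ) - 1 - 2 * (i : ℕ))
  | .inr (.inl j) => -α * q p ^ ((p : ℤ) - s - 1 - 2 * (j : ℕ))
  | .inr (.inr (.inl k)) => -α * q p ^ ((p : ℤ) - s - 1 - 2 * (k : ℕ))
  | .inr (.inr (.inr l)) => α * q p ^ ((s : ℤ) - 1 - 2 * (l : ℕ))

/-- Matrix of `K` on `P^α(s)` in the standard basis. -/
def PK (p : ℕ) (α : ℂ) (s : ℕ) : Matrix (PIdx p s) (PIdx p s) ℂ :=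
  Matrix.diagonal (PKdiag p α s)

/-- Matrix of `E` on `P^α(s)` in the standard basis. -/
def PE (p : ℕ) (α : ℂ) (s : ℕ) : Matrix (PIdx p s) (PIdx p s) ℂ :=
  Matrix.of fun i j =>
    match i, j with
    | .inl i, .inl j =>
        if (i : ℕ) + 1 = (j : ℕ) then α * qi p (j : ℕ) * qi p ((s : ℤ) - (j : ℕ)) else 0
    | .inr (.inl jx), .inl j => if (j : ℕ) = 0 ∧ (jx : ℕ) + 1 = p - s then 1 else 0
    | .inr (.inr (.inr l)), .inl j => if (l : ℕ) + 1 = (j : ℕ) then 1 else 0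
    | .inr (.inl i), .inr (.inl j) =>
        if (i : ℕ) + 1 = (j : ℕ) then -α * qi p (j : ℕ) * qi p ((p : ℤ) - s - (j : ℕ)) else 0
    | .inr (.inr (.inl i)), .inr (.inr (.inl k)) =>
        if (i : ℕ) + 1 = (k : ℕ) then -α * qi p (k : ℕ) * qi p ((p : ℤ) - s - (k : ℕ)) else 0
    | .inr (.inr (.inr l)), .inr (.inr (.inl k)) =>
        if (k : ℕ) = 0 ∧ (l : ℕ) + 1 = s then 1 else 0
    | .inr (.inr (.inr i)), .inr (.inr (.inr l)) =>
        if (i : ℕ) + 1 = (l : ℕ) then α * qi p (l : ℕ) * qi p ((s : ℤ) - (l : ℕ)) else 0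
    | _, _ => 0

/-- Matrix of `F` on `P^α(s)` in the standard basis. -/
def PF (p s : ℕ) : Matrix (PIdx p s) (PIdx p s) ℂ :=
  Matrix.of fun i j =>
    match i, j with
    | .inl i, .inl j => if (i : ℕ) = (j : ℕ) + 1 then (1 : ℂ) else 0
    | .inr (.inr (.inl k)), .inl j => if (j : ℕ) + 1 = s ∧ (k : ℕ) = 0 then 1 else 0
    | .inr (.inl i), .inr (.inl j) => if (i : ℕ) = (j : ℕ) + 1 then 1 else 0
    | .inr (.inr (.inr l)), .inr (.inl j) => if (j : ℕ) + 1 = p - s ∧ (l : ℕ) = 0 then 1 else 0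
    | .inr (.inr (.inl i)), .inr (.inr (.inl k)) => if (i : ℕ) = (k : ℕ) + 1 then 1 else 0
    | .inr (.inr (.inr i)), .inr (.inr (.inr l)) => if (i : ℕ) = (l : ℕ) + 1 then 1 else 0
    | _, _ => 0

/-- The statement that `ρP α s` is the representation on `P^α(s)` for the relevant
values of `α` and `s`. -/
def IsPRep (p : ℕ)
    (ρP : (α : ℂ) → (s : ℕ) → (Uq p →ₐ[ℂ] Matrix (PIdx p s) (PIdx p s) ℂ)) : Prop :=
  ∀ α : ℂ, (α = 1 ∨ α = -1) → ∀ s : ℕ, 1 ≤ s → s ≤ p - 1 →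
    ρP α s (KK p) = PK p α s ∧ ρP α s (EE p) = PE p α s ∧ ρP α s (FF p) = PF p s

/-! ### Symmetric linear forms, characters, and the forms `G_s` -/

/-- Symmetric linear forms. -/
def IsSLF (p : ℕ) (φ : Uq p →ₗ[ℂ] ℂ) : Prop := ∀ x y : Uq p, φ (x * y) = φ (y * x)

/-- The character of a matrix representation. -/
def chiOf (p : ℕ) {n : Type} [Fintype n] [DecidableEq n]
    (ρ : Uq p →ₐ[ℂ] Matrix n n ℂ) : Uq p →ₗ[ℂ] ℂ :=
  (Matrix.traceLinearMap n ℂ ℂ).comp ρ.toLinearMap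

/-- The matrix entry functional. -/
def entry {n : Type} (i j : n) : Matrix n n ℂ →ₗ[ℂ] ℂ where
  toFun M := M i j
  map_add' _ _ := rfl
  map_smul' _ _ := rfl

/-- The symmetric linear form `G_s = tr H^+_s + tr H^-_{p-s}`. -/
def GOf (p : ℕ)
    (ρP : (α : ℂ) → (s : ℕ) → (Uq p →ₐ[ℂ] Matrix (PIdx p s) (PIdx p s) ℂ))
    (s : ℕ) : Uq p →ₗ[ℂ] ℂ :=
  (∑ i : Fin s,
    (entry (Sum.inr (Sum.inr (Sum.inr i))) (Sum.inl i)).comp (ρP 1 s).toLinearMap) +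
  (∑ j : Fin (p - s),
    (entry (Sum.inr (Sum.inr (Sum.inr j))) (Sum.inl j)).comp (ρP (-1) (p - s)).toLinearMap)

/-! ### Convolution product -/

/-- The convolution product of two linear forms, with respect to a comultiplication `Δ`. -/
def conv (p : ℕ) (Δ : Uq p →ₐ[ℂ] (Uq p ⊗[ℂ] Uq p)) (φ ψ : Uq p →ₗ[ℂ] ℂ) :
    Uq p →ₗ[ℂ] ℂ :=
  (LinearMap.mul' ℂ ℂ).comp ((TensorProduct.map φ ψ).comp Δ.toLinearMap)

/-- The statement that `Δ` is the comultiplication of `Ū_q(sl₂)`. -/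
def IsCoprod (p : ℕ) (Δ : Uq p →ₐ[ℂ] (Uq p ⊗[ℂ] Uq p)) : Prop :=
  Δ (EE p) = 1 ⊗ₜ[ℂ] EE p + EE p ⊗ₜ[ℂ] KK p ∧
  Δ (FF p) = FF p ⊗ₜ[ℂ] 1 + KKinv p ⊗ₜ[ℂ] FF p ∧
  Δ (KK p) = KK p ⊗ₜ[ℂ] KK p ∧
  Δ (KKinv p) = KKinv p ⊗ₜ[ℂ] KKinv p

/-!
Let `C` be the Casimir element. A linear form invariant under conjugation by `K` vanishes on the PBW
monomials `F^m E^n K^j` with `m ≠ n`, and `C^n K^j` agrees with `F^n E^n K^j` modulo monomials of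
lower degree; so such a form is determined by its values on `C^n K^j` with `n < p`.

The form `μ(K^{p+1}·)` takes the value `ζ` on `C^n K^j` if `n = p - 1` and `2p ∣ j`, and `0`
otherwise. On `P^α(s)` the Casimir element maps `b_i` to a multiple of itself plus `a_i`, and `a_i`
to the same multiple of itself, so `G_s` picks up the derivative of the `n`-th power at the
eigenvalue. With the coefficients of the expansion, the `s`-th summand has at `C^n K^j` a value
proportional to that of `x d/dx ((x - x⁻¹) (x + x⁻¹)^n)` at `x = q^s`, twisted by a character in
`s`. Summing over `s` extracts Fourier coefficients of this Laurent polynomial, and only its extreme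
exponents `±p`, which occur for `n = p - 1`, contribute.

The right integral property is a degree argument as well: only the leading term of `Δ` in the first
tensor factor is seen by `μ`.
-/

section Matrix

open scoped Matrix

variable {ι : Type*} [Fintype ι] [DecidableEq ι]

theorem pow_mulVec_eq_add_smul {R : Type*} [CommSemiring R] {M : Matrix ι ι R} {v w : ι → R}
    {c : R} (hv : M *ᵥ v = c • v + w) (hw : M *ᵥ w = c • w) (n : ℕ) :
    (M ^ n) *ᵥ v = c ^ n • v + (n * c ^ (n - 1)) • w := by
  induction n with
  | zero => simp
  | succ n ih =>
    rw [pow_succ', ← Matrix.mulVec_mulVec, ih, Matrix.mulVec_add, Matrix.mulVec_smul,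
      Matrix.mulVec_smul, hv, hw, smul_add, smul_smul, smul_smul, ← pow_succ, add_assoc, ← add_smul]
    congr 2
    rcases n with - | n
    · simp
    · rw [Nat.add_sub_cancel, Nat.add_sub_cancel]
      push_cast
      ring

theorem diagonal_mulVec_single_one {R : Type*} [NonAssocSemiring R] (δ : ι → R) (a : ι) :
    Matrix.diagonal δ *ᵥ Pi.single a 1 = δ a • Pi.single a 1 := by
  rw [Matrix.mulVec_single_one]
  ext b
  rcases eq_or_ne b a with rfl | h
  · simp
  · simp [h]

end Matrix

section RootsOfUnity

variable {p : ℕ}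

theorem sum_range_zpow_pow_of_isPrimitiveRoot {k : Type*} [Field k] {ζ : k} {n : ℕ}
    (hζ : IsPrimitiveRoot ζ n) (a : ℤ) :
    ∑ i ∈ Finset.range n, (ζ ^ a) ^ i = if (n : ℤ) ∣ a then (n : k) else 0 := by
  split_ifs with h
  · simp [(hζ.zpow_eq_one_iff_dvd a).2 h]
  · have hne : ζ ^ a ≠ 1 := fun e => h ((hζ.zpow_eq_one_iff_dvd a).1 e)
    have hpow : (ζ ^ a) ^ n = 1 := by
      rw [← zpow_natCast, zpow_comm, zpow_natCast, hζ.pow_eq_one, one_zpow]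
    rw [geom_sum_eq hne, hpow, sub_self, zero_div]

theorem q_ne_zero (p : ℕ) : q p ≠ 0 := Complex.exp_ne_zero _

theorem isPrimitiveRoot_q [NeZero p] : IsPrimitiveRoot (q p) (2 * p) := by
  have hp : (p : ℂ) ≠ 0 := NeZero.ne _
  have hq : q p = Complex.exp (2 * Real.pi * Complex.I / (2 * p : ℕ)) := by
    rw [q, Nat.cast_mul, Nat.cast_two]
    congr 1
    field_simp
  rw [hq]
  exact Complex.isPrimitiveRoot_exp _ (mul_ne_zero two_ne_zero (NeZero.ne p))

theorem q_pow_self [NeZero p] : q p ^ p = -1 :=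
  (isPrimitiveRoot_q.pow (mul_pos two_pos (NeZero.pos p)) (mul_comm 2 p)).eq_neg_one_of_two_right

theorem isPrimitiveRoot_q_sq [NeZero p] : IsPrimitiveRoot (q p ^ 2) p :=
  isPrimitiveRoot_q.pow (mul_pos two_pos (NeZero.pos p)) rfl

theorem q_zpow_add_self [NeZero p] (k : ℤ) : q p ^ (k + p) = -q p ^ k := by
  rw [zpow_add₀ (q_ne_zero p), zpow_natCast, q_pow_self, mul_neg_one]

theorem q_zpow_sub_add_zpow_neg_sub [NeZero p] (s : ℤ) :
    q p ^ (p - s) + q p ^ (-(p - s)) = -(q p ^ s + q p ^ (-s)) := by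
  have h := q_zpow_add_self (p := p) (s - p)
  rw [sub_add_cancel] at h
  rw [neg_sub, ← neg_add_eq_sub, q_zpow_add_self, h]
  ring

theorem q_sub_inv_ne_zero [p.AtLeastTwo] : q p - (q p)⁻¹ ≠ 0 := by
  have hp : 2 ≤ p := Nat.AtLeastTwo.prop
  intro h
  have hsq : q p ^ 2 = 1 := by
    rw [pow_two]
    nth_rewrite 2 [sub_eq_zero.1 h]
    exact mul_inv_cancel₀ (q_ne_zero p)
  exact isPrimitiveRoot_q.pow_ne_one_of_pos_of_lt two_ne_zero (by lia) hsq

-- `(1 - q^{2k}) (1 - q^{-2k}) = -(q^k - q^{-k})²`, and both factors run over all `1 - ω` for the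
-- nontrivial `p`-th roots of unity `ω`, whose product is `p`.
theorem qfact_sub_one_sq_mul [p.AtLeastTwo] :
    (-1) ^ (p - 1) * qfact p (p - 1) ^ 2 * ((q p - (q p)⁻¹) ^ 2) ^ (p - 1) = (p : ℂ) ^ 2 := by
  obtain ⟨n, rfl⟩ : ∃ n, p = n + 1 := ⟨p - 1, by have := NeZero.pos p; lia⟩
  have hfactor (k : ℕ) : -1 * qi (n + 1) (k + 1) ^ 2 * (q (n + 1) - (q (n + 1))⁻¹) ^ 2 =
      (1 - (q (n + 1) ^ 2) ^ (k + 1)) * (1 - (q (n + 1) ^ 2)⁻¹ ^ (k + 1)) := by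
    have hk : q (n + 1) ^ (k + 1) ≠ 0 := pow_ne_zero _ (q_ne_zero _)
    rw [mul_assoc, qi, div_pow, div_mul_cancel₀ _ (pow_ne_zero 2 q_sub_inv_ne_zero), zpow_neg,
      show (k + 1 : ℤ) = (k + 1 : ℕ) by push_cast; rfl, zpow_natCast, inv_pow, pow_right_comm]
    field_simp
    ring
  have hprod := isPrimitiveRoot_q_sq (p := n + 1).prod_one_sub_pow_eq_order
  have hprod_inv := isPrimitiveRoot_q_sq (p := n + 1).inv.prod_one_sub_pow_eq_order
  calc (-1) ^ n * qfact (n + 1) n ^ 2 * ((q (n + 1) - (q (n + 1))⁻¹) ^ 2) ^ n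
      = ∏ k ∈ Finset.range n,
          (-1 * qi (n + 1) (k + 1) ^ 2 * (q (n + 1) - (q (n + 1))⁻¹) ^ 2) := by
        rw [Finset.prod_mul_distrib, Finset.prod_mul_distrib, Finset.prod_pow, Finset.prod_const,
          Finset.prod_const, Finset.card_range, qfact]
    _ = ((n + 1 : ℕ) : ℂ) ^ 2 := by
        simp only [hfactor, Finset.prod_mul_distrib, hprod, hprod_inv]
        push_cast
        ring

theorem qi_sq (p : ℕ) (s : ℤ) :
    qi p s ^ 2 = (q p ^ s - q p ^ (-s)) ^ 2 / (q p - (q p)⁻¹) ^ 2 := by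
  rw [qi, div_pow]

end RootsOfUnity

theorem sum_range_two_mul_of_reflect {M : Type*} [AddCommMonoid M] {p : ℕ} (hp : 0 < p)
    (f : ℕ → M) (hf : ∀ s ≤ 2 * p, f (2 * p - s) = f s) :
    ∑ s ∈ Finset.range (2 * p), f s = f 0 + f p + 2 • ∑ s ∈ Finset.Icc 1 (p - 1), f s := by
  have hIcc : Finset.Icc 1 (p - 1) = Finset.Ico 1 p := by ext; simp; lia
  have hreflect : ∑ s ∈ Finset.Ico (p + 1) (2 * p), f s = ∑ s ∈ Finset.Ico 1 p, f s := by
    have h := Finset.sum_Ico_reflect f 1 (m := p) (n := 2 * p) (by lia)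
    rw [show 2 * p + 1 - p = p + 1 by lia, Nat.add_sub_cancel] at h
    rw [← h]
    exact Finset.sum_congr rfl fun s hs => hf s (by have := Finset.mem_Ico.1 hs; lia)
  rw [hIcc, Finset.range_eq_Ico, ← Finset.sum_Ico_consecutive f (Nat.zero_le p) (by lia),
    Finset.sum_eq_sum_Ico_succ_bot hp, Finset.sum_eq_sum_Ico_succ_bot (by lia : p < 2 * p),
    hreflect, two_nsmul, zero_add]
  abel

section EulerDerivative

/-- The value at `x` of `x d/dx` applied to `(x - x⁻¹) (x + x⁻¹) ^ n`, in closed form. For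
`x = q ^ s` it is, up to normalization, the combined value of the `s`-th summand of the GTA
expansion on the `n`-th power of the Casimir element. -/
def eulerDeriv (n : ℕ) (x : ℂ) : ℂ :=
  (x + x⁻¹) ^ (n + 1) + n * (x - x⁻¹) ^ 2 * (x + x⁻¹) ^ (n - 1)

theorem eulerDeriv_inv (n : ℕ) (x : ℂ) : eulerDeriv n x⁻¹ = eulerDeriv n x := by
  simp only [eulerDeriv, inv_inv]
  ring

theorem sub_inv_mul_add_inv_pow (n : ℕ) {x : ℂ} (hx : x ≠ 0) :
    (x - x⁻¹) * (x + x⁻¹) ^ n = ∑ m ∈ Finset.range (n + 1),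
      (n.choose m : ℂ) * (x ^ (2 * m - n + 1 : ℤ) - x ^ (2 * m - n - 1 : ℤ)) := by
  rw [add_pow, Finset.mul_sum]
  refine Finset.sum_congr rfl fun m hm => ?_
  have hmn : m ≤ n := Finset.mem_range_succ_iff.1 hm
  have hk : (2 * m - n : ℤ) = m - (n - m : ℕ) := by push_cast [hmn]; ring
  rw [hk, zpow_add_one₀ hx, zpow_sub_one₀ hx, zpow_sub₀ hx, zpow_natCast, zpow_natCast, inv_pow]
  ring

theorem eulerDeriv_eq_sum (n : ℕ) {x : ℂ} (hx : x ≠ 0) :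
    eulerDeriv n x = ∑ m ∈ Finset.range (n + 1), (n.choose m : ℂ) *
      ((2 * m - n + 1 : ℤ) * x ^ (2 * m - n + 1 : ℤ) -
        (2 * m - n - 1 : ℤ) * x ^ (2 * m - n - 1 : ℤ)) := by
  have hprod : HasDerivAt (fun y : ℂ => (y - y⁻¹) * (y + y⁻¹) ^ n) (eulerDeriv n x / x) x := by
    have hinv : HasDerivAt (fun y : ℂ => y⁻¹) (-(x ^ 2)⁻¹) x := hasDerivAt_inv hx
    refine (((hasDerivAt_id' x).fun_sub hinv).fun_mul
      (((hasDerivAt_id' x).fun_add hinv).fun_pow n)).congr_deriv ?_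
    rw [eulerDeriv, pow_succ (x + x⁻¹)]
    generalize (x + x⁻¹) ^ n = A, (x + x⁻¹) ^ (n - 1) = B
    field_simp
    ring
  have hsum : HasDerivAt (fun y : ℂ => (y - y⁻¹) * (y + y⁻¹) ^ n)
      (∑ m ∈ Finset.range (n + 1), (n.choose m : ℂ) *
        ((2 * m - n + 1 : ℤ) * x ^ (2 * m - n + 1 - 1 : ℤ) -
          (2 * m - n - 1 : ℤ) * x ^ (2 * m - n - 1 - 1 : ℤ))) x :=
    (HasDerivAt.fun_sum fun m _ =>
      ((hasDerivAt_zpow _ x (.inl hx)).sub (hasDerivAt_zpow _ x (.inl hx))).const_mul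
        _).congr_of_eventuallyEq
      ((eventually_ne_nhds hx).mono fun y hy => sub_inv_mul_add_inv_pow n hy)
  rw [← div_left_inj' hx, hprod.unique hsum, Finset.sum_div]
  refine Finset.sum_congr rfl fun m _ => ?_
  rw [zpow_sub_one₀ hx, zpow_sub_one₀ hx (2 * m - n - 1)]
  ring

theorem sum_range_zpow_mul_eulerDeriv {N : ℕ} {ζ : ℂ} (hζ : IsPrimitiveRoot ζ N) (a : ℤ) (n : ℕ) :
    ∑ s ∈ Finset.range N, (ζ ^ a) ^ s * eulerDeriv n (ζ ^ s) =
      ∑ m ∈ Finset.range (n + 1), (n.choose m : ℂ) *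
        ((2 * m - n + 1 : ℤ) * (if (N : ℤ) ∣ a + (2 * m - n + 1) then (N : ℂ) else 0) -
          (2 * m - n - 1 : ℤ) * (if (N : ℤ) ∣ a + (2 * m - n - 1) then (N : ℂ) else 0)) := by
  rcases eq_or_ne N 0 with rfl | hN
  · simp
  have hζ0 : ζ ≠ 0 := hζ.ne_zero hN
  have hterm (b : ℤ) (s : ℕ) : (ζ ^ a) ^ s * (ζ ^ s) ^ b = (ζ ^ (a + b)) ^ s := by
    rw [zpow_add₀ hζ0, mul_pow, ← zpow_natCast, ← zpow_natCast, zpow_comm ζ s b,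
      zpow_natCast (ζ ^ b)]
  simp only [eulerDeriv_eq_sum n (pow_ne_zero _ hζ0), Finset.mul_sum]
  rw [Finset.sum_comm]
  refine Finset.sum_congr rfl fun m _ => ?_
  simp only [← sum_range_zpow_pow_of_isPrimitiveRoot hζ, Finset.mul_sum,
    ← Finset.sum_sub_distrib, ← hterm]
  refine Finset.sum_congr rfl fun s _ => ?_
  ring

theorem sum_range_zpow_mul_eulerDeriv_of_dvd {N : ℕ} {ζ : ℂ} (hζ : IsPrimitiveRoot ζ N)
    {a : ℤ} (ha : (N : ℤ) ∣ a) {n : ℕ} (hn : n + 1 < N) :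
    ∑ s ∈ Finset.range N, (ζ ^ a) ^ s * eulerDeriv n (ζ ^ s) = 0 := by
  have hcoeff {b : ℤ} (hb : |b| < N) : (b : ℂ) * (if (N : ℤ) ∣ a + b then (N : ℂ) else 0) = 0 := by
    split_ifs with h
    · simp [Int.eq_zero_of_abs_lt_dvd ((dvd_add_right ha).1 h) hb]
    · rw [mul_zero]
  rw [sum_range_zpow_mul_eulerDeriv hζ]
  refine Finset.sum_eq_zero fun m hm => ?_
  have hmn : m ≤ n := Finset.mem_range_succ_iff.1 hm
  rw [hcoeff (abs_lt.2 ⟨by lia, by lia⟩), hcoeff (abs_lt.2 ⟨by lia, by lia⟩), sub_zero, mul_zero]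

theorem two_mul_dvd_add_iff {p a b : ℤ} (hp : 0 < p) (ha : 2 * p ∣ a - p) (hb : -p ≤ b)
    (hb' : b ≤ p) : 2 * p ∣ a + b ↔ b = p ∨ b = -p := by
  rw [show a + b = a - p + (b + p) by ring, dvd_add_right ha]
  constructor
  · rintro ⟨c, hc⟩
    have hc_nonneg : -1 < c := by nlinarith
    have hc_le_one : c < 2 := by nlinarith
    obtain rfl | rfl : c = 0 ∨ c = 1 := by lia
    · right; linarith
    · left; linarith
  · rintro (rfl | rfl)
    · exact ⟨1, by ring⟩
    · simp

-- Only the extreme exponents `±p` of the Laurent polynomial are congruent to `p` modulo `2p`.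
theorem sum_range_zpow_mul_eulerDeriv_of_half {p : ℕ} {ζ : ℂ} (hζ : IsPrimitiveRoot ζ (2 * p))
    {a : ℤ} (ha : ((2 * p : ℕ) : ℤ) ∣ a - p) {n : ℕ} (hn : n < p) :
    ∑ s ∈ Finset.range (2 * p), (ζ ^ a) ^ s * eulerDeriv n (ζ ^ s) =
      if n = p - 1 then 4 * (p : ℂ) ^ 2 else 0 := by
  have hp : (0 : ℤ) < p := by lia
  push_cast at ha
  have hupper (m : ℕ) (hm : m ≤ n) :
      ((2 * p : ℕ) : ℤ) ∣ a + (2 * m - n + 1) ↔ m = n ∧ n = p - 1 := by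
    rw [Nat.cast_mul, Nat.cast_two, two_mul_dvd_add_iff hp ha (by lia) (by lia)]
    lia
  have hlower (m : ℕ) (hm : m ≤ n) :
      ((2 * p : ℕ) : ℤ) ∣ a + (2 * m - n - 1) ↔ m = 0 ∧ n = p - 1 := by
    rw [Nat.cast_mul, Nat.cast_two, two_mul_dvd_add_iff hp ha (by lia) (by lia)]
    lia
  rw [sum_range_zpow_mul_eulerDeriv hζ, Finset.sum_congr rfl fun m hm => by
    rw [if_congr (hupper m (Finset.mem_range_succ_iff.1 hm)) rfl rfl,
      if_congr (hlower m (Finset.mem_range_succ_iff.1 hm)) rfl rfl]]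
  by_cases h : n = p - 1
  · have hcast : (n : ℂ) + 1 = p := by
      have : n + 1 = p := by lia
      exact_mod_cast this
    simp only [h, and_true, if_true, mul_sub, Finset.sum_sub_distrib, mul_ite, mul_zero]
    rw [← h, Finset.sum_ite_eq_of_mem' _ _ _ (Finset.self_mem_range_succ n),
      Finset.sum_ite_eq_of_mem' _ _ _ (Finset.mem_range.2 n.succ_pos), Nat.choose_self,
      Nat.choose_zero_right]
    push_cast
    linear_combination 4 * (p : ℂ) * hcast
  · simp only [h, and_false, if_false, mul_zero, sub_zero, Finset.sum_const_zero]

end EulerDerivative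

section Relations

variable (p : ℕ)

theorem KK_mul_KKinv : KK p * KKinv p = 1 := by
  simpa [KK, KKinv] using RingQuot.mkAlgHom_rel ℂ (rel.KKinv (p := p))

theorem KKinv_mul_KK : KKinv p * KK p = 1 := by
  simpa [KK, KKinv] using RingQuot.mkAlgHom_rel ℂ (rel.KinvK (p := p))

theorem EE_pow_self : EE p ^ p = 0 := by
  simpa [EE] using RingQuot.mkAlgHom_rel ℂ (rel.Ep (p := p))

theorem FF_pow_self : FF p ^ p = 0 := by
  simpa [FF] using RingQuot.mkAlgHom_rel ℂ (rel.Fp (p := p))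

theorem KK_pow_two_mul_self : KK p ^ (2 * p) = 1 := by
  simpa [KK] using RingQuot.mkAlgHom_rel ℂ (rel.K2p (p := p))

theorem KK_mul_EE : KK p * EE p = q p ^ 2 • (EE p * KK p) := by
  simpa [KK, EE] using RingQuot.mkAlgHom_rel ℂ (rel.KE (p := p))

theorem KK_mul_FF : KK p * FF p = (q p ^ 2)⁻¹ • (FF p * KK p) := by
  simpa [KK, FF] using RingQuot.mkAlgHom_rel ℂ (rel.KF (p := p))

theorem EE_mul_FF :
    EE p * FF p = FF p * EE p + (q p - (q p)⁻¹)⁻¹ • (KK p - KKinv p) := by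
  have h : EE p * FF p - FF p * EE p = (q p - (q p)⁻¹)⁻¹ • (KK p - KKinv p) := by
    simpa [KK, EE, FF, KKinv] using RingQuot.mkAlgHom_rel ℂ (rel.EF (p := p))
  rw [← h, add_sub_cancel]

theorem KKinv_eq_KK_pow [NeZero p] : KKinv p = KK p ^ (2 * p - 1) := by
  have hp := NeZero.pos p
  calc KKinv p = KK p ^ (2 * p - 1) * KK p * KKinv p := by
        rw [← pow_succ, Nat.sub_add_cancel (by lia), KK_pow_two_mul_self, one_mul]
    _ = KK p ^ (2 * p - 1) := by rw [mul_assoc, KK_mul_KKinv, mul_one]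

theorem KK_pow_mod (j : ℕ) : KK p ^ (j % (2 * p)) = KK p ^ j :=
  (pow_eq_pow_mod j (KK_pow_two_mul_self p)).symm

end Relations

section PBW

variable {p : ℕ}

/-- The PBW monomial `F ^ m E ^ n K ^ j`, with unrestricted exponents. -/
def pbwMonomial (p m n j : ℕ) : Uq p := FF p ^ m * EE p ^ n * KK p ^ j

theorem FF_mul_pbwMonomial (m n j : ℕ) :
    FF p * pbwMonomial p m n j = pbwMonomial p (m + 1) n j := by
  simp only [pbwMonomial, pow_succ', mul_assoc]

theorem pbwMonomial_mul_KK (m n j : ℕ) :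
    pbwMonomial p m n j * KK p = pbwMonomial p m n (j + 1) := by
  simp only [pbwMonomial, pow_succ, mul_assoc]

theorem KK_mul_pbwMonomial (m n j : ℕ) :
    KK p * pbwMonomial p m n j =
      (q p ^ 2) ^ ((n : ℤ) - m) • (pbwMonomial p m n j * KK p) := by
  have hF : SemiconjBy (KK p) (FF p) ((q p ^ 2)⁻¹ • FF p) := by
    rw [SemiconjBy, KK_mul_FF, smul_mul_assoc]
  have hE : SemiconjBy (KK p) (EE p) (q p ^ 2 • EE p) := by
    rw [SemiconjBy, KK_mul_EE, smul_mul_assoc]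
  rw [pbwMonomial, (((hF.pow_right m).mul_right (hE.pow_right n)).mul_right
    ((Commute.refl (KK p)).pow_right j)).eq]
  simp only [smul_pow, smul_mul_assoc, mul_smul_comm, smul_smul]
  rw [zpow_sub₀ (pow_ne_zero 2 (q_ne_zero p)), zpow_natCast, zpow_natCast, inv_pow, div_eq_mul_inv]

theorem pbwMonomial_eq_zero {m n : ℕ} (h : p ≤ m ∨ p ≤ n) (j : ℕ) : pbwMonomial p m n j = 0 := by
  rcases h with h | h
  · rw [pbwMonomial, pow_eq_zero_of_le h (FF_pow_self p), zero_mul, zero_mul]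
  · rw [pbwMonomial, pow_eq_zero_of_le h (EE_pow_self p), mul_zero, zero_mul]

theorem pbwMonomial_mod (m n j : ℕ) :
    pbwMonomial p m n (j % (2 * p)) = pbwMonomial p m n j := by
  rw [pbwMonomial, pbwMonomial, KK_pow_mod]

/-- The PBW filtration of `Ū_q`: the span of the monomials `F ^ m E ^ n K ^ j` of total degree
`m + n` strictly less than `d`, so that `pbwFiltration p 0 = ⊥`. -/
def pbwFiltration (p d : ℕ) : Submodule ℂ (Uq p) :=
  Submodule.span ℂ {x | ∃ m n j, m + n < d ∧ pbwMonomial p m n j = x}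

theorem pbwMonomial_mem_pbwFiltration {m n d : ℕ} (h : m + n < d) (j : ℕ) :
    pbwMonomial p m n j ∈ pbwFiltration p d :=
  Submodule.subset_span ⟨m, n, j, h, rfl⟩

theorem pbwFiltration_mono : Monotone (pbwFiltration p) := fun _ _ hde =>
  Submodule.span_mono fun _ ⟨m, n, j, h, hx⟩ => ⟨m, n, j, h.trans_le hde, hx⟩

theorem pbwFiltration_le {S : Submodule ℂ (Uq p)} {d : ℕ}
    (h : ∀ m < p, ∀ n < p, ∀ j, m + n < d → pbwMonomial p m n j ∈ S) : pbwFiltration p d ≤ S := by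
  refine Submodule.span_le.2 ?_
  rintro _ ⟨m, n, j, hd, rfl⟩
  by_cases hmn : p ≤ m ∨ p ≤ n
  · rw [pbwMonomial_eq_zero hmn]
    exact S.zero_mem
  · exact h m (by lia) n (by lia) j hd

theorem KK_mul_mem_pbwFiltration {d : ℕ} {x : Uq p} (hx : x ∈ pbwFiltration p d) :
    KK p * x ∈ pbwFiltration p d := by
  refine (pbwFiltration_le (S := (pbwFiltration p d).comap (LinearMap.mulLeft ℂ (KK p)))
    fun m _ n _ j h => ?_) hx
  rw [Submodule.mem_comap, LinearMap.mulLeft_apply, KK_mul_pbwMonomial, pbwMonomial_mul_KK]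
  exact Submodule.smul_mem _ _ (pbwMonomial_mem_pbwFiltration h _)

theorem KK_pow_mul_mem_pbwFiltration (i : ℕ) {d : ℕ} {x : Uq p} (hx : x ∈ pbwFiltration p d) :
    KK p ^ i * x ∈ pbwFiltration p d := by
  induction i with
  | zero => rwa [pow_zero, one_mul]
  | succ i ih =>
    rw [pow_succ', mul_assoc]
    exact KK_mul_mem_pbwFiltration ih

theorem KKinv_mul_mem_pbwFiltration [NeZero p] {d : ℕ} {x : Uq p} (hx : x ∈ pbwFiltration p d) :
    KKinv p * x ∈ pbwFiltration p d := by
  rw [KKinv_eq_KK_pow]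
  exact KK_pow_mul_mem_pbwFiltration _ hx

theorem FF_mul_mem_pbwFiltration {d : ℕ} {x : Uq p} (hx : x ∈ pbwFiltration p d) :
    FF p * x ∈ pbwFiltration p (d + 1) := by
  refine (pbwFiltration_le (S := (pbwFiltration p (d + 1)).comap (LinearMap.mulLeft ℂ (FF p)))
    fun m _ n _ j h => ?_) hx
  rw [Submodule.mem_comap, LinearMap.mulLeft_apply, FF_mul_pbwMonomial]
  exact pbwMonomial_mem_pbwFiltration (by lia) j

theorem EE_mul_pbwMonomial_sub_mem [NeZero p] (m n j : ℕ) :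
    EE p * pbwMonomial p m n j - pbwMonomial p m (n + 1) j ∈ pbwFiltration p (m + n) := by
  induction m with
  | zero =>
    rw [show EE p * pbwMonomial p 0 n j = pbwMonomial p 0 (n + 1) j by
      simp only [pbwMonomial, pow_succ', pow_zero, one_mul, mul_assoc], sub_self]
    exact Submodule.zero_mem _
  | succ m ih =>
    have hsplit : EE p * pbwMonomial p (m + 1) n j - pbwMonomial p (m + 1) (n + 1) j =
        FF p * (EE p * pbwMonomial p m n j - pbwMonomial p m (n + 1) j) +
          (q p - (q p)⁻¹)⁻¹ • (KK p * pbwMonomial p m n j - KKinv p * pbwMonomial p m n j) := by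
      rw [← FF_mul_pbwMonomial, ← FF_mul_pbwMonomial, ← mul_assoc, EE_mul_FF, add_mul,
        smul_mul_assoc, sub_mul, mul_sub, mul_assoc]
      abel
    have hmon : pbwMonomial p m n j ∈ pbwFiltration p (m + 1 + n) :=
      pbwMonomial_mem_pbwFiltration (by lia) j
    rw [hsplit]
    refine Submodule.add_mem _ ?_ (Submodule.smul_mem _ _ (Submodule.sub_mem _
      (KK_mul_mem_pbwFiltration hmon) (KKinv_mul_mem_pbwFiltration hmon)))
    rw [add_right_comm]
    exact FF_mul_mem_pbwFiltration ih

theorem EE_mul_mem_pbwFiltration [NeZero p] {d : ℕ} {x : Uq p} (hx : x ∈ pbwFiltration p d) :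
    EE p * x ∈ pbwFiltration p (d + 1) := by
  refine (pbwFiltration_le (S := (pbwFiltration p (d + 1)).comap (LinearMap.mulLeft ℂ (EE p)))
    fun m _ n _ j h => ?_) hx
  rw [Submodule.mem_comap, LinearMap.mulLeft_apply,
    ← sub_add_cancel (EE p * pbwMonomial p m n j) (pbwMonomial p m (n + 1) j)]
  exact Submodule.add_mem _ (pbwFiltration_mono (by lia) (EE_mul_pbwMonomial_sub_mem m n j))
    (pbwMonomial_mem_pbwFiltration (by lia) j)

theorem exists_mem_pbwFiltration [NeZero p] (x : Uq p) : ∃ d, x ∈ pbwFiltration p d := by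
  obtain ⟨y, rfl⟩ := RingQuot.mkAlgHom_surjective ℂ (rel p) x
  suffices h : ∃ k, ∀ d, ∀ w ∈ pbwFiltration p d,
      RingQuot.mkAlgHom ℂ (rel p) y * w ∈ pbwFiltration p (d + k) by
    obtain ⟨k, hk⟩ := h
    have hone : (1 : Uq p) ∈ pbwFiltration p 1 := by
      simpa [pbwMonomial] using pbwMonomial_mem_pbwFiltration (p := p) (m := 0) (n := 0) one_pos 0
    exact ⟨1 + k, by simpa using hk 1 1 hone⟩
  induction y using FreeAlgebra.induction with
  | grade0 r =>
    refine ⟨0, fun d w hw => ?_⟩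
    rw [AlgHom.commutes, ← Algebra.smul_def]
    exact Submodule.smul_mem _ _ hw
  | grade1 g =>
    cases g with
    | E => exact ⟨1, fun d w => EE_mul_mem_pbwFiltration⟩
    | F => exact ⟨1, fun d w => FF_mul_mem_pbwFiltration⟩
    | K => exact ⟨0, fun d w => KK_mul_mem_pbwFiltration⟩
    | Kinv => exact ⟨0, fun d w => KKinv_mul_mem_pbwFiltration⟩
  | mul a b ha hb =>
    obtain ⟨k, hk⟩ := ha
    obtain ⟨l, hl⟩ := hb
    refine ⟨l + k, fun d w hw => ?_⟩
    rw [map_mul, mul_assoc, ← add_assoc]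
    exact hk _ _ (hl d w hw)
  | add a b ha hb =>
    obtain ⟨k, hk⟩ := ha
    obtain ⟨l, hl⟩ := hb
    refine ⟨k + l, fun d w hw => ?_⟩
    rw [map_add, add_mul]
    exact Submodule.add_mem _ (pbwFiltration_mono (by lia) (hk d w hw))
      (pbwFiltration_mono (by lia) (hl d w hw))

theorem eq_top_of_pbwFiltration_le [NeZero p] {S : Submodule ℂ (Uq p)}
    (h : ∀ d, pbwFiltration p d ≤ S) : S = ⊤ :=
  eq_top_iff.2 fun x _ => let ⟨d, hd⟩ := exists_mem_pbwFiltration x; h d hd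

theorem linearMap_ext_pbwMonomial [NeZero p] {M : Type*} [AddCommMonoid M] [Module ℂ M]
    {f g : Uq p →ₗ[ℂ] M}
    (h : ∀ m < p, ∀ n < p, ∀ j, f (pbwMonomial p m n j) = g (pbwMonomial p m n j)) : f = g :=
  LinearMap.eqLocus_eq_top.1 <| eq_top_of_pbwFiltration_le fun _ =>
    pbwFiltration_le fun m hm n hn j _ => h m hm n hn j

end PBW

section Casimir

variable {p : ℕ}

/-- The Casimir element `FE + (q - q⁻¹)⁻² (qK + q⁻¹K⁻¹)` of `Ū_q`. -/
def casimir (p : ℕ) : Uq p :=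
  FF p * EE p + ((q p - (q p)⁻¹) ^ 2)⁻¹ • (q p • KK p + (q p)⁻¹ • KKinv p)

theorem commute_KK_casimir (p : ℕ) : Commute (KK p) (casimir p) := by
  have hFE : Commute (KK p) (FF p * EE p) := by
    rw [Commute, SemiconjBy, ← mul_assoc, KK_mul_FF, smul_mul_assoc, mul_assoc, KK_mul_EE,
      mul_smul_comm, smul_smul, inv_mul_cancel₀ (pow_ne_zero 2 (q_ne_zero p)), one_smul, mul_assoc]
  have hKinv : Commute (KK p) (KKinv p) := by
    rw [Commute, SemiconjBy, KK_mul_KKinv, KKinv_mul_KK]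
  exact hFE.add_right ((((Commute.refl _).smul_right _).add_right
    (hKinv.smul_right _)).smul_right _)

theorem casimir_mul_pbwMonomial_sub_mem [NeZero p] (m n j : ℕ) :
    casimir p * pbwMonomial p m n j - pbwMonomial p (m + 1) (n + 1) j ∈
      pbwFiltration p (m + n + 1) := by
  have hsplit : casimir p * pbwMonomial p m n j - pbwMonomial p (m + 1) (n + 1) j =
      FF p * (EE p * pbwMonomial p m n j - pbwMonomial p m (n + 1) j) +
        ((q p - (q p)⁻¹) ^ 2)⁻¹ • (q p • (KK p * pbwMonomial p m n j) +
          (q p)⁻¹ • (KKinv p * pbwMonomial p m n j)) := by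
    rw [casimir, ← FF_mul_pbwMonomial]
    simp only [add_mul, smul_mul_assoc, mul_sub, mul_assoc]
    abel
  have hmon : pbwMonomial p m n j ∈ pbwFiltration p (m + n + 1) :=
    pbwMonomial_mem_pbwFiltration (Nat.lt_succ_self _) j
  rw [hsplit]
  exact Submodule.add_mem _ (FF_mul_mem_pbwFiltration (EE_mul_pbwMonomial_sub_mem m n j))
    (Submodule.smul_mem _ _ (Submodule.add_mem _
      (Submodule.smul_mem _ _ (KK_mul_mem_pbwFiltration hmon))
      (Submodule.smul_mem _ _ (KKinv_mul_mem_pbwFiltration hmon))))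

theorem casimir_mul_mem_pbwFiltration [NeZero p] {d : ℕ} {x : Uq p}
    (hx : x ∈ pbwFiltration p d) : casimir p * x ∈ pbwFiltration p (d + 2) := by
  refine (pbwFiltration_le
    (S := (pbwFiltration p (d + 2)).comap (LinearMap.mulLeft ℂ (casimir p)))
    fun m _ n _ j h => ?_) hx
  rw [Submodule.mem_comap, LinearMap.mulLeft_apply,
    ← sub_add_cancel (casimir p * pbwMonomial p m n j) (pbwMonomial p (m + 1) (n + 1) j)]
  exact Submodule.add_mem _ (pbwFiltration_mono (by lia) (casimir_mul_pbwMonomial_sub_mem m n j))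
    (pbwMonomial_mem_pbwFiltration (by lia) j)

theorem casimir_pow_mul_KK_pow_sub_mem [NeZero p] (n j : ℕ) :
    casimir p ^ n * KK p ^ j - pbwMonomial p n n j ∈ pbwFiltration p (2 * n) := by
  induction n with
  | zero => simp [pbwMonomial]
  | succ n ih =>
    have hsplit : casimir p ^ (n + 1) * KK p ^ j - pbwMonomial p (n + 1) (n + 1) j =
        casimir p * (casimir p ^ n * KK p ^ j - pbwMonomial p n n j) +
          (casimir p * pbwMonomial p n n j - pbwMonomial p (n + 1) (n + 1) j) := by
      rw [mul_sub, pow_succ', mul_assoc, sub_add_sub_cancel]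
    rw [hsplit]
    exact Submodule.add_mem _ (casimir_mul_mem_pbwFiltration ih)
      (pbwFiltration_mono (by lia) (casimir_mul_pbwMonomial_sub_mem n n j))

/-- The linear forms on `Ū_q` invariant under conjugation by `K`. They contain the symmetric
linear forms and are determined by their values on the elements `C ^ n K ^ j` with `n < p`, where
`C` is the Casimir element. -/
def kInvariantForms (p : ℕ) : Submodule ℂ (Uq p →ₗ[ℂ] ℂ) where
  carrier := {φ | ∀ x, φ (KK p * x) = φ (x * KK p)}
  zero_mem' _ := rfl
  add_mem' hφ hψ x := by rw [LinearMap.add_apply, LinearMap.add_apply, hφ x, hψ x]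
  smul_mem' c φ hφ x := by rw [LinearMap.smul_apply, LinearMap.smul_apply, hφ x]

theorem apply_pbwMonomial_eq_zero_of_mem_kInvariantForms {φ : Uq p →ₗ[ℂ] ℂ}
    (hφ : φ ∈ kInvariantForms p) {m n : ℕ} (hm : m < p) (hn : n < p) (hmn : m ≠ n) (j : ℕ) :
    φ (pbwMonomial p m n j) = 0 := by
  have : NeZero p := ⟨by lia⟩
  have hweight : (q p ^ 2) ^ ((n : ℤ) - m) ≠ 1 := fun h => by
    have hdvd := (isPrimitiveRoot_q_sq.zpow_eq_one_iff_dvd _).1 h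
    have := Int.eq_zero_of_abs_lt_dvd hdvd (abs_lt.2 ⟨by lia, by lia⟩)
    lia
  have hperiod : pbwMonomial p m n (j + (2 * p - 1)) * KK p = pbwMonomial p m n j := by
    rw [pbwMonomial_mul_KK, add_assoc, Nat.sub_add_cancel (by lia), ← pbwMonomial_mod,
      Nat.add_mod_right, pbwMonomial_mod]
  have hinv := hφ (pbwMonomial p m n (j + (2 * p - 1)))
  rw [KK_mul_pbwMonomial, map_smul, hperiod, smul_eq_mul] at hinv
  by_contra h0
  exact hweight (mul_right_cancel₀ h0 (hinv.trans (one_mul _).symm))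

theorem ext_of_mem_kInvariantForms [NeZero p] {φ ψ : Uq p →ₗ[ℂ] ℂ}
    (hφ : φ ∈ kInvariantForms p) (hψ : ψ ∈ kInvariantForms p)
    (h : ∀ n < p, ∀ j, φ (casimir p ^ n * KK p ^ j) = ψ (casimir p ^ n * KK p ^ j)) : φ = ψ := by
  refine LinearMap.eqLocus_eq_top.1 (eq_top_of_pbwFiltration_le fun d => ?_)
  induction d with
  | zero => exact pbwFiltration_le fun m _ n _ j hmn => absurd hmn (Nat.not_lt_zero _)
  | succ d ih =>
    refine pbwFiltration_le fun m hm n hn j hd => LinearMap.mem_eqLocus.2 ?_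
    by_cases hmn : m = n
    · subst hmn
      have hlow := ih (pbwFiltration_mono (by lia) (casimir_pow_mul_KK_pow_sub_mem m j))
      rw [LinearMap.mem_eqLocus, map_sub, map_sub, h m hm j] at hlow
      exact sub_right_inj.1 hlow
    · rw [apply_pbwMonomial_eq_zero_of_mem_kInvariantForms hφ hm hn hmn,
        apply_pbwMonomial_eq_zero_of_mem_kInvariantForms hψ hm hn hmn]

end Casimir

section Integral

variable {p : ℕ} {ζ : ℂ} {μ : Uq p →ₗ[ℂ] ℂ} {Δ : Uq p →ₐ[ℂ] (Uq p ⊗[ℂ] Uq p)}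

/-- `μ` is `ζ` times the coordinate form of `F ^ (p - 1) E ^ (p - 1) K ^ (p + 1)` in the PBW
basis: the shape of a right integral of `Ū_q`. -/
def IsTopCoordinate (p : ℕ) (ζ : ℂ) (μ : Uq p →ₗ[ℂ] ℂ) : Prop :=
  ∀ m n j : ℕ, m ≤ p - 1 → n ≤ p - 1 → j ≤ 2 * p - 1 →
    μ (FF p ^ m * EE p ^ n * KK p ^ j) = if m = p - 1 ∧ n = p - 1 ∧ j = p + 1 then ζ else 0

theorem IsTopCoordinate.apply_pbwMonomial [p.AtLeastTwo] (hμ : IsTopCoordinate p ζ μ) {m n : ℕ}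
    (hm : m < p) (hn : n < p) (j : ℕ) :
    μ (pbwMonomial p m n j) =
      if m = p - 1 ∧ n = p - 1 ∧ j ≡ p + 1 [MOD 2 * p] then ζ else 0 := by
  have hp : 2 ≤ p := Nat.AtLeastTwo.prop
  have hj : j % (2 * p) < 2 * p := Nat.mod_lt _ (by lia)
  have hmod : j ≡ p + 1 [MOD 2 * p] ↔ j % (2 * p) = p + 1 := by
    unfold Nat.ModEq
    rw [Nat.mod_eq_of_lt (by lia : p + 1 < 2 * p)]
  rw [← pbwMonomial_mod, pbwMonomial, hμ m n _ (by lia) (by lia) (by lia)]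
  simp only [hmod]

theorem IsTopCoordinate.pbwFiltration_le_ker [p.AtLeastTwo] (hμ : IsTopCoordinate p ζ μ) :
    pbwFiltration p (2 * p - 2) ≤ LinearMap.ker μ :=
  pbwFiltration_le fun m hm n hn j h => by
    rw [LinearMap.mem_ker, hμ.apply_pbwMonomial hm hn, if_neg (by lia)]

/-- The filtration of `Ū_q ⊗ Ū_q` induced by the PBW filtration of the first factor. -/
def pbwFiltrationLeft (p d : ℕ) : Submodule ℂ (Uq p ⊗[ℂ] Uq p) :=
  Submodule.map₂ (TensorProduct.mk ℂ (Uq p) (Uq p)) (pbwFiltration p d) ⊤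

theorem tmul_mem_pbwFiltrationLeft {d : ℕ} {x : Uq p} (hx : x ∈ pbwFiltration p d) (y : Uq p) :
    x ⊗ₜ[ℂ] y ∈ pbwFiltrationLeft p d :=
  Submodule.apply_mem_map₂ _ hx Submodule.mem_top

theorem pbwFiltrationLeft_mono : Monotone (pbwFiltrationLeft p) := fun _ _ h =>
  Submodule.map₂_le_map₂_left (pbwFiltration_mono h)

theorem tmul_mul_mem_pbwFiltrationLeft {d e : ℕ} {a : Uq p}
    (ha : ∀ x ∈ pbwFiltration p d, a * x ∈ pbwFiltration p e) (b : Uq p) {t : Uq p ⊗[ℂ] Uq p}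
    (ht : t ∈ pbwFiltrationLeft p d) : a ⊗ₜ[ℂ] b * t ∈ pbwFiltrationLeft p e := by
  have hle : pbwFiltrationLeft p d ≤
      (pbwFiltrationLeft p e).comap (LinearMap.mulLeft ℂ (a ⊗ₜ[ℂ] b)) :=
    Submodule.map₂_le.2 fun x hx y _ => by
      rw [Submodule.mem_comap, LinearMap.mulLeft_apply, TensorProduct.mk_apply,
        Algebra.TensorProduct.tmul_mul_tmul]
      exact tmul_mem_pbwFiltrationLeft (ha x hx) _
  exact hle ht

theorem IsCoprod.exists_map_EE_pow_mul_KK_pow_eq [NeZero p] (hΔ : IsCoprod p Δ) (n j : ℕ) :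
    ∃ r ∈ pbwFiltrationLeft p n,
      Δ (EE p ^ n * KK p ^ j) = (EE p ^ n * KK p ^ j) ⊗ₜ[ℂ] (KK p ^ (n + j)) + r := by
  obtain ⟨hE, -, hK, -⟩ := hΔ
  induction n with
  | zero =>
    refine ⟨0, Submodule.zero_mem _, ?_⟩
    rw [pow_zero, one_mul, zero_add, add_zero, map_pow, hK, Algebra.TensorProduct.tmul_pow]
  | succ n ih =>
    obtain ⟨r, hr, hΔr⟩ := ih
    have hmon : EE p ^ n * KK p ^ j ∈ pbwFiltration p (n + 1) := by
      simpa [pbwMonomial] using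
        pbwMonomial_mem_pbwFiltration (p := p) (m := 0) (n := n) (d := n + 1) (by lia) j
    refine ⟨(EE p ^ n * KK p ^ j) ⊗ₜ[ℂ] (EE p * KK p ^ (n + j)) +
      (1 ⊗ₜ[ℂ] EE p * r + EE p ⊗ₜ[ℂ] KK p * r), ?_, ?_⟩
    · exact Submodule.add_mem _ (tmul_mem_pbwFiltrationLeft hmon _) (Submodule.add_mem _
        (tmul_mul_mem_pbwFiltrationLeft
          (fun x hx => by rw [one_mul]; exact pbwFiltration_mono n.le_succ hx) _ hr)
        (tmul_mul_mem_pbwFiltrationLeft (fun x => EE_mul_mem_pbwFiltration) _ hr))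
    · rw [pow_succ', mul_assoc, map_mul, hE, hΔr, add_mul, mul_add, mul_add,
        Algebra.TensorProduct.tmul_mul_tmul, Algebra.TensorProduct.tmul_mul_tmul, one_mul,
        ← pow_succ', add_right_comm n j 1]
      abel

theorem IsCoprod.exists_map_pbwMonomial_eq [NeZero p] (hΔ : IsCoprod p Δ) (m n j : ℕ) :
    ∃ r ∈ pbwFiltrationLeft p (m + n),
      Δ (pbwMonomial p m n j) = pbwMonomial p m n j ⊗ₜ[ℂ] (KK p ^ (n + j)) + r := by
  induction m with
  | zero => simpa [pbwMonomial] using hΔ.exists_map_EE_pow_mul_KK_pow_eq n j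
  | succ m ih =>
    obtain ⟨r, hr, hΔr⟩ := ih
    rw [add_right_comm m 1 n]
    refine ⟨(KKinv p * pbwMonomial p m n j) ⊗ₜ[ℂ] (FF p * KK p ^ (n + j)) +
      (FF p ⊗ₜ[ℂ] 1 * r + KKinv p ⊗ₜ[ℂ] FF p * r), ?_, ?_⟩
    · exact Submodule.add_mem _
        (tmul_mem_pbwFiltrationLeft (KKinv_mul_mem_pbwFiltration
          (pbwMonomial_mem_pbwFiltration (Nat.lt_succ_self _) j)) _)
        (Submodule.add_mem _
          (tmul_mul_mem_pbwFiltrationLeft (fun x => FF_mul_mem_pbwFiltration) _ hr)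
          (tmul_mul_mem_pbwFiltrationLeft (fun x hx => pbwFiltration_mono (Nat.le_succ _)
            (KKinv_mul_mem_pbwFiltration hx)) _ hr))
    · rw [← FF_mul_pbwMonomial, map_mul, hΔ.2.1, hΔr, add_mul, mul_add, mul_add,
        Algebra.TensorProduct.tmul_mul_tmul, Algebra.TensorProduct.tmul_mul_tmul, one_mul]
      abel

/-- The contraction `(μ ⊗ id) : Ū_q ⊗ Ū_q → Ū_q` of the first tensor factor. -/
def contractLeft (μ : Uq p →ₗ[ℂ] ℂ) : Uq p ⊗[ℂ] Uq p →ₗ[ℂ] Uq p :=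
  (TensorProduct.lid ℂ (Uq p)).toLinearMap ∘ₗ TensorProduct.map μ LinearMap.id

theorem contractLeft_tmul (μ : Uq p →ₗ[ℂ] ℂ) (x y : Uq p) :
    contractLeft μ (x ⊗ₜ[ℂ] y) = μ x • y := rfl

theorem pbwFiltrationLeft_le_ker_contractLeft {d : ℕ} (h : pbwFiltration p d ≤ LinearMap.ker μ) :
    pbwFiltrationLeft p d ≤ LinearMap.ker (contractLeft μ) :=
  Submodule.map₂_le.2 fun x hx y _ => by
    rw [LinearMap.mem_ker, TensorProduct.mk_apply, contractLeft_tmul, LinearMap.mem_ker.1 (h hx),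
      zero_smul]

-- Modulo lower terms in the first factor `Δ` sends `F ^ m E ^ n K ^ j` to
-- `F ^ m E ^ n K ^ j ⊗ K ^ (n + j)`, and `n + j = 2p` for the monomial detected by `μ`.
theorem IsTopCoordinate.contractLeft_comul [p.AtLeastTwo] (hμ : IsTopCoordinate p ζ μ)
    (hΔ : IsCoprod p Δ) (x : Uq p) : contractLeft μ (Δ x) = μ x • 1 := by
  suffices h : contractLeft μ ∘ₗ Δ.toLinearMap = μ.smulRight 1 from LinearMap.congr_fun h x
  refine linearMap_ext_pbwMonomial fun m hm n hn j => ?_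
  obtain ⟨r, hr, hΔr⟩ := hΔ.exists_map_pbwMonomial_eq m n j
  have hlow : contractLeft μ r = 0 :=
    pbwFiltrationLeft_le_ker_contractLeft hμ.pbwFiltration_le_ker
      (pbwFiltrationLeft_mono (by lia) hr)
  rw [LinearMap.comp_apply, AlgHom.toLinearMap_apply, LinearMap.smulRight_apply, hΔr, map_add,
    hlow, add_zero, contractLeft_tmul, hμ.apply_pbwMonomial hm hn]
  split_ifs with h
  · obtain ⟨-, rfl, hj⟩ := h
    have hexp : p - 1 + j ≡ 0 [MOD 2 * p] :=
      (hj.add_left (p - 1)).trans (by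
        rw [show p - 1 + (p + 1) = 2 * p by lia]
        exact Nat.mod_self _)
    rw [← KK_pow_mod, hexp, Nat.zero_mod, pow_zero]
  · rw [zero_smul, zero_smul]

theorem IsTopCoordinate.mem_kInvariantForms [p.AtLeastTwo] (hμ : IsTopCoordinate p ζ μ) :
    μ ∈ kInvariantForms p := by
  suffices h : μ ∘ₗ LinearMap.mulLeft ℂ (KK p) = μ ∘ₗ LinearMap.mulRight ℂ (KK p) from
    LinearMap.congr_fun h
  refine linearMap_ext_pbwMonomial fun m hm n hn j => ?_
  rw [LinearMap.comp_apply, LinearMap.comp_apply, LinearMap.mulLeft_apply,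
    LinearMap.mulRight_apply, KK_mul_pbwMonomial, map_smul, pbwMonomial_mul_KK,
    hμ.apply_pbwMonomial hm hn]
  split_ifs with h
  · rw [h.1, h.2.1, sub_self, zpow_zero, one_smul]
  · rw [smul_zero]

theorem comp_mulLeft_KK_pow_mem_kInvariantForms {φ : Uq p →ₗ[ℂ] ℂ} (hφ : φ ∈ kInvariantForms p)
    (k : ℕ) : φ ∘ₗ LinearMap.mulLeft ℂ (KK p ^ k) ∈ kInvariantForms p := fun x => by
  simp only [LinearMap.comp_apply, LinearMap.mulLeft_apply]
  rw [← mul_assoc, ← pow_succ, pow_succ', mul_assoc, hφ, mul_assoc]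

theorem IsTopCoordinate.apply_KK_pow_mul_casimir_pow_mul_KK_pow [p.AtLeastTwo]
    (hμ : IsTopCoordinate p ζ μ) {n : ℕ} (hn : n < p) (j : ℕ) :
    μ (KK p ^ (p + 1) * (casimir p ^ n * KK p ^ j)) = if n = p - 1 ∧ 2 * p ∣ j then ζ else 0 := by
  have hlow := hμ.pbwFiltration_le_ker (pbwFiltration_mono (by lia)
    (casimir_pow_mul_KK_pow_sub_mem n (p + 1 + j)))
  rw [LinearMap.mem_ker, map_sub, sub_eq_zero] at hlow
  rw [← mul_assoc, ((commute_KK_casimir p).pow_pow _ _).eq, mul_assoc, ← pow_add, hlow,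
    hμ.apply_pbwMonomial hn hn]
  simp only [and_self_left, Nat.add_modEq_left_iff]

end Integral

section Representations

open scoped Matrix

variable {p : ℕ} {ι : Type*} [Fintype ι] [DecidableEq ι]

/-- The scalar `c` such that the Casimir element acts by `α c` on `X^α(s)`. -/
def casimirEigenvalue (p : ℕ) (s : ℤ) : ℂ :=
  (q p ^ s + q p ^ (-s)) / (q p - (q p)⁻¹) ^ 2

theorem casimir_scalar_eq [p.AtLeastTwo] {α : ℂ} (hα : α = 1 ∨ α = -1) (s i : ℤ) :
    α * qi p i * qi p (s - i) + ((q p - (q p)⁻¹) ^ 2)⁻¹ *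
        (q p * (α * q p ^ (s - 1 - 2 * i)) + (q p)⁻¹ * (α * q p ^ (s - 1 - 2 * i))⁻¹) =
      α * casimirEigenvalue p s := by
  have hq := q_ne_zero p
  have : q p - (q p)⁻¹ ≠ 0 := q_sub_inv_ne_zero
  have hα_inv : α⁻¹ = α := by rcases hα with rfl | rfl <;> norm_num
  have hK : q p * q p ^ (s - 1 - 2 * i) = q p ^ (s - i) * q p ^ (-i) := by
    rw [← zpow_one_add₀ hq, ← zpow_add₀ hq]
    congr 1
    ring
  have hKinv : (q p)⁻¹ * (q p ^ (s - 1 - 2 * i))⁻¹ = q p ^ i * q p ^ (-(s - i)) := by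
    rw [← mul_inv, hK, mul_inv, ← zpow_neg, ← zpow_neg, neg_neg, mul_comm]
  have hs : q p ^ s = q p ^ i * q p ^ (s - i) := by rw [← zpow_add₀ hq, add_sub_cancel]
  have hs' : q p ^ (-s) = q p ^ (-i) * q p ^ (-(s - i)) := by
    rw [← zpow_add₀ hq]
    congr 1
    ring
  rw [mul_inv, hα_inv, mul_left_comm (q p), mul_left_comm (q p)⁻¹, hK, hKinv, casimirEigenvalue,
    hs, hs', qi, qi]
  field_simp
  ring

theorem map_KKinv_mulVec (ρ : Uq p →ₐ[ℂ] Matrix ι ι ℂ) {v : ι → ℂ} {κ : ℂ} (hκ : κ ≠ 0)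
    (hv : ρ (KK p) *ᵥ v = κ • v) : ρ (KKinv p) *ᵥ v = κ⁻¹ • v := by
  have hKinv : ρ (KKinv p) *ᵥ (ρ (KK p) *ᵥ v) = v := by
    rw [Matrix.mulVec_mulVec, ← map_mul, KKinv_mul_KK, map_one, Matrix.one_mulVec]
  rw [hv, Matrix.mulVec_smul] at hKinv
  rw [eq_inv_smul_iff₀ hκ, hKinv]

theorem map_casimir_mulVec [p.AtLeastTwo] (ρ : Uq p →ₐ[ℂ] Matrix ι ι ℂ) {α : ℂ}
    (hα : α = 1 ∨ α = -1) {s i : ℤ} {v w : ι → ℂ}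
    (hK : ρ (KK p) *ᵥ v = (α * q p ^ (s - 1 - 2 * i)) • v)
    (hFE : ρ (FF p) *ᵥ (ρ (EE p) *ᵥ v) = (α * qi p i * qi p (s - i)) • v + w) :
    ρ (casimir p) *ᵥ v = (α * casimirEigenvalue p s) • v + w := by
  have hα0 : α ≠ 0 := by rcases hα with rfl | rfl <;> norm_num
  have hKinv := map_KKinv_mulVec ρ (mul_ne_zero hα0 (zpow_ne_zero _ (q_ne_zero p))) hK
  rw [← casimir_scalar_eq hα s i, casimir]
  simp only [map_add, map_mul, map_smul, Matrix.add_mulVec, Matrix.smul_mulVec,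
    ← Matrix.mulVec_mulVec, hFE, hK, hKinv, add_smul, mul_smul, smul_add]
  abel

theorem map_casimir_pow_mul_KK_pow_mulVec (ρ : Uq p →ₐ[ℂ] Matrix ι ι ℂ) {v w : ι → ℂ} {κ c : ℂ}
    (hK : ρ (KK p) *ᵥ v = κ • v) (hv : ρ (casimir p) *ᵥ v = c • v + w)
    (hw : ρ (casimir p) *ᵥ w = c • w) (n j : ℕ) :
    ρ (casimir p ^ n * KK p ^ j) *ᵥ v = κ ^ j • (c ^ n • v + (n * c ^ (n - 1)) • w) := by
  have hKj : (ρ (KK p) ^ j) *ᵥ v = κ ^ j • v := by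
    have h := pow_mulVec_eq_add_smul (w := 0) (by rw [hK, add_zero])
      (by rw [Matrix.mulVec_zero, smul_zero]) j
    rwa [smul_zero, add_zero] at h
  rw [map_mul, map_pow, map_pow, ← Matrix.mulVec_mulVec, hKj, Matrix.mulVec_smul,
    pow_mulVec_eq_add_smul hv hw]

theorem chiOf_mem_kInvariantForms {ι : Type} [Fintype ι] [DecidableEq ι]
    (ρ : Uq p →ₐ[ℂ] Matrix ι ι ℂ) : chiOf p ρ ∈ kInvariantForms p :=
  fun x => by
    change (ρ (KK p * x)).trace = (ρ (x * KK p)).trace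
    rw [map_mul, map_mul, Matrix.trace_mul_comm]

theorem entry_comp_mem_kInvariantForms {ι : Type} [Fintype ι] [DecidableEq ι]
    (ρ : Uq p →ₐ[ℂ] Matrix ι ι ℂ) {δ : ι → ℂ}
    (hK : ρ (KK p) = Matrix.diagonal δ) {a b : ι} (hab : δ a = δ b) :
    (entry a b).comp ρ.toLinearMap ∈ kInvariantForms p := fun x => by
  change ρ (KK p * x) a b = ρ (x * KK p) a b
  rw [map_mul, map_mul, hK, Matrix.diagonal_mul, Matrix.mul_diagonal, hab, mul_comm]

/-- The power sum `∑ κ ^ j` over the weights `κ` of `K` on `X^α(s)`. -/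
def weightSum (p : ℕ) (α : ℂ) (s j : ℕ) : ℂ :=
  ∑ i : Fin s, (α * q p ^ ((s : ℤ) - 1 - 2 * (i : ℕ))) ^ j

section Simple

variable {α : ℂ} {s : ℕ}

theorem XE_mulVec_eq_zero {i : Fin s} (hi : (i : ℕ) = 0) : XE p α s *ᵥ Pi.single i 1 = 0 := by
  rw [Matrix.mulVec_single_one]
  ext t
  simp [XE, hi]

theorem XE_mulVec {i k : Fin s} (hik : (k : ℕ) + 1 = i) :
    XE p α s *ᵥ Pi.single i 1 =
      (α * qi p (i : ℕ) * qi p ((s : ℤ) - (i : ℕ))) • Pi.single k 1 := by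
  rw [Matrix.mulVec_single_one]
  ext t
  simp [XE, ← hik, Pi.single_apply, Fin.ext_iff]

theorem XF_mulVec {i k : Fin s} (hik : (k : ℕ) + 1 = i) :
    XF s *ᵥ Pi.single k 1 = Pi.single i 1 := by
  rw [Matrix.mulVec_single_one]
  ext t
  simp [XF, hik, Pi.single_apply, Fin.ext_iff]

theorem XF_mulVec_XE_mulVec (i : Fin s) :
    XF s *ᵥ (XE p α s *ᵥ Pi.single i 1) =
      (α * qi p (i : ℕ) * qi p ((s : ℤ) - (i : ℕ))) • Pi.single i 1 := by
  rcases Nat.eq_zero_or_eq_succ_pred (i : ℕ) with hi | hi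
  · simp [XE_mulVec_eq_zero hi, hi, qi]
  · obtain ⟨k, hk⟩ : ∃ k : Fin s, (k : ℕ) + 1 = i := ⟨⟨(i : ℕ) - 1, by lia⟩, hi.symm⟩
    rw [XE_mulVec hk, Matrix.mulVec_smul, XF_mulVec hk]

theorem IsXRep.chiOf_casimir_pow_mul_KK_pow [p.AtLeastTwo]
    {ρX : (α : ℂ) → (s : ℕ) → (Uq p →ₐ[ℂ] Matrix (Fin s) (Fin s) ℂ)} (hX : IsXRep p ρX)
    (hα : α = 1 ∨ α = -1) (hs : 1 ≤ s) (hsp : s ≤ p) (n j : ℕ) :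
    chiOf p (ρX α s) (casimir p ^ n * KK p ^ j) =
      (α * casimirEigenvalue p s) ^ n * weightSum p α s j := by
  obtain ⟨hK, hE, hF⟩ := hX α hα s hs hsp
  have hdiag (i : Fin s) : ρX α s (casimir p ^ n * KK p ^ j) i i =
      (α * casimirEigenvalue p s) ^ n * (α * q p ^ ((s : ℤ) - 1 - 2 * (i : ℕ))) ^ j := by
    have hKi : ρX α s (KK p) *ᵥ Pi.single i 1 =
        (α * q p ^ ((s : ℤ) - 1 - 2 * (i : ℕ))) • Pi.single i 1 := by
      rw [hK, XK, diagonal_mulVec_single_one]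
    have hCi : ρX α s (casimir p) *ᵥ Pi.single i 1 =
        (α * casimirEigenvalue p s) • Pi.single i 1 + 0 :=
      map_casimir_mulVec _ hα hKi (by rw [hE, hF, XF_mulVec_XE_mulVec, add_zero])
    have h := map_casimir_pow_mul_KK_pow_mulVec _ hKi hCi (by simp) n j
    simpa [Matrix.mulVec_single_one, mul_comm] using congrFun h i
  change (ρX α s (casimir p ^ n * KK p ^ j)).trace = _
  rw [weightSum, Finset.mul_sum, Matrix.trace]
  exact Finset.sum_congr rfl fun i _ => hdiag i

end Simple

section Projective

variable {α : ℂ} {s : ℕ}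

/-- The basis vector `b_i` of `P^α(s)`. -/
abbrev vecB (p : ℕ) {s : ℕ} (i : Fin s) : PIdx p s → ℂ := Pi.single (.inl i) 1

/-- The basis vector `x_j` of `P^α(s)`. -/
abbrev vecX {p s : ℕ} (j : Fin (p - s)) : PIdx p s → ℂ := Pi.single (.inr (.inl j)) 1

/-- The basis vector `a_l` of `P^α(s)`. -/
abbrev vecA (p : ℕ) {s : ℕ} (l : Fin s) : PIdx p s → ℂ := Pi.single (.inr (.inr (.inr l))) 1

theorem PE_mulVec_vecB_of_eq_zero {i : Fin s} (hi : (i : ℕ) = 0) {j : Fin (p - s)}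
    (hj : (j : ℕ) + 1 = p - s) : PE p α s *ᵥ vecB p i = vecX j := by
  rw [Matrix.mulVec_single_one]
  ext (t | t | t | t) <;> simp [PE, hi, ← hj, Pi.single_apply, Fin.ext_iff]

theorem PE_mulVec_vecB {i k : Fin s} (hik : (k : ℕ) + 1 = i) :
    PE p α s *ᵥ vecB p i =
      (α * qi p (i : ℕ) * qi p ((s : ℤ) - (i : ℕ))) • vecB p k + vecA p k := by
  rw [Matrix.mulVec_single_one]
  ext (t | t | t | t) <;> simp [PE, ← hik, Pi.single_apply, Fin.ext_iff]

theorem PE_mulVec_vecA_of_eq_zero {l : Fin s} (hl : (l : ℕ) = 0) : PE p α s *ᵥ vecA p l = 0 := by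
  rw [Matrix.mulVec_single_one]
  ext (t | t | t | t) <;> simp [PE, hl]

theorem PE_mulVec_vecA {i k : Fin s} (hik : (k : ℕ) + 1 = i) :
    PE p α s *ᵥ vecA p i = (α * qi p (i : ℕ) * qi p ((s : ℤ) - (i : ℕ))) • vecA p k := by
  rw [Matrix.mulVec_single_one]
  ext (t | t | t | t) <;> simp [PE, ← hik, Pi.single_apply, Fin.ext_iff]

theorem PF_mulVec_vecB {i k : Fin s} (hik : (k : ℕ) + 1 = i) :
    PF p s *ᵥ vecB p k = vecB p i := by
  rw [Matrix.mulVec_single_one]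
  ext (t | t | t | t) <;> simp [PF, hik, Pi.single_apply, Fin.ext_iff, i.isLt.ne]

theorem PF_mulVec_vecA {i k : Fin s} (hik : (k : ℕ) + 1 = i) :
    PF p s *ᵥ vecA p k = vecA p i := by
  rw [Matrix.mulVec_single_one]
  ext (t | t | t | t) <;> simp [PF, hik, Pi.single_apply, Fin.ext_iff]

theorem PF_mulVec_vecX_of_add_one_eq {j : Fin (p - s)} (hj : (j : ℕ) + 1 = p - s) {l : Fin s}
    (hl : (l : ℕ) = 0) : PF p s *ᵥ vecX j = vecA p l := by
  rw [Matrix.mulVec_single_one]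
  ext (t | t | t | t) <;> simp [PF, hj, hl, Pi.single_apply, Fin.ext_iff, t.isLt.ne]

theorem PF_mulVec_PE_mulVec_vecA (l : Fin s) :
    PF p s *ᵥ (PE p α s *ᵥ vecA p l) =
      (α * qi p (l : ℕ) * qi p ((s : ℤ) - (l : ℕ))) • vecA p l := by
  rcases Nat.eq_zero_or_eq_succ_pred (l : ℕ) with hl | hl
  · simp [PE_mulVec_vecA_of_eq_zero hl, hl, qi]
  · obtain ⟨k, hk⟩ : ∃ k : Fin s, (k : ℕ) + 1 = l := ⟨⟨(l : ℕ) - 1, by lia⟩, hl.symm⟩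
    rw [PE_mulVec_vecA hk, Matrix.mulVec_smul, PF_mulVec_vecA hk]

theorem PF_mulVec_PE_mulVec_vecB (hs : s < p) (i : Fin s) :
    PF p s *ᵥ (PE p α s *ᵥ vecB p i) =
      (α * qi p (i : ℕ) * qi p ((s : ℤ) - (i : ℕ))) • vecB p i + vecA p i := by
  rcases Nat.eq_zero_or_eq_succ_pred (i : ℕ) with hi | hi
  · obtain ⟨j, hj⟩ : ∃ j : Fin (p - s), (j : ℕ) + 1 = p - s :=
      ⟨⟨p - s - 1, by lia⟩, Nat.sub_add_cancel (by lia)⟩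
    rw [PE_mulVec_vecB_of_eq_zero hi hj, PF_mulVec_vecX_of_add_one_eq hj hi]
    simp [hi, qi]
  · obtain ⟨k, hk⟩ : ∃ k : Fin s, (k : ℕ) + 1 = i := ⟨⟨(i : ℕ) - 1, by lia⟩, hi.symm⟩
    rw [PE_mulVec_vecB hk, Matrix.mulVec_add, Matrix.mulVec_smul, PF_mulVec_vecB hk,
      PF_mulVec_vecA hk]

/-- The linear form `tr H^α_s` attached to a representation on `P^α(s)`. -/
def traceH (ρ : Uq p →ₐ[ℂ] Matrix (PIdx p s) (PIdx p s) ℂ) : Uq p →ₗ[ℂ] ℂ :=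
  ∑ i : Fin s, (entry (Sum.inr (Sum.inr (Sum.inr i))) (Sum.inl i)).comp ρ.toLinearMap

variable {ρP : (α : ℂ) → (s : ℕ) → (Uq p →ₐ[ℂ] Matrix (PIdx p s) (PIdx p s) ℂ)}

theorem GOf_eq_traceH_add (s : ℕ) :
    GOf p ρP s = traceH (ρP 1 s) + traceH (ρP (-1) (p - s)) :=
  rfl

theorem IsPRep.traceH_mem_kInvariantForms (hP : IsPRep p ρP) (hα : α = 1 ∨ α = -1) (hs : 1 ≤ s)
    (hsp : s ≤ p - 1) : traceH (ρP α s) ∈ kInvariantForms p :=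
  Submodule.sum_mem _ fun _ _ => entry_comp_mem_kInvariantForms _ (hP α hα s hs hsp).1 rfl

theorem IsPRep.traceH_casimir_pow_mul_KK_pow [p.AtLeastTwo] (hP : IsPRep p ρP)
    (hα : α = 1 ∨ α = -1) (hs : 1 ≤ s) (hsp : s ≤ p - 1) (n j : ℕ) :
    traceH (ρP α s) (casimir p ^ n * KK p ^ j) =
      n * (α * casimirEigenvalue p s) ^ (n - 1) * weightSum p α s j := by
  obtain ⟨hK, hE, hF⟩ := hP α hα s hs hsp
  have hentry (i : Fin s) :
      ρP α s (casimir p ^ n * KK p ^ j) (.inr (.inr (.inr i))) (.inl i) =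
        n * (α * casimirEigenvalue p s) ^ (n - 1) *
          (α * q p ^ ((s : ℤ) - 1 - 2 * (i : ℕ))) ^ j := by
    have hKb : ρP α s (KK p) *ᵥ vecB p i =
        (α * q p ^ ((s : ℤ) - 1 - 2 * (i : ℕ))) • vecB p i := by
      rw [hK, PK, diagonal_mulVec_single_one, PKdiag]
    have hKa : ρP α s (KK p) *ᵥ vecA p i =
        (α * q p ^ ((s : ℤ) - 1 - 2 * (i : ℕ))) • vecA p i := by
      rw [hK, PK, diagonal_mulVec_single_one, PKdiag]
    have hCb := map_casimir_mulVec _ hα hKb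
      (by rw [hE, hF, PF_mulVec_PE_mulVec_vecB (by lia)])
    have hCa := map_casimir_mulVec _ hα hKa (w := 0)
      (by rw [hE, hF, PF_mulVec_PE_mulVec_vecA, add_zero])
    rw [add_zero] at hCa
    have h := map_casimir_pow_mul_KK_pow_mulVec _ hKb hCb hCa n j
    simpa [Matrix.mulVec_single_one, mul_comm] using congrFun h (.inr (.inr (.inr i)))
  rw [weightSum, Finset.mul_sum, traceH, LinearMap.sum_apply]
  exact Finset.sum_congr rfl fun i _ => hentry i

end Projective

end Representations

section GTAExpansion

variable {p : ℕ}
  {ρX : (α : ℂ) → (s : ℕ) → (Uq p →ₐ[ℂ] Matrix (Fin s) (Fin s) ℂ)}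
  {ρP : (α : ℂ) → (s : ℕ) → (Uq p →ₐ[ℂ] Matrix (PIdx p s) (PIdx p s) ℂ)}

theorem neg_one_mul_casimirEigenvalue_sub [NeZero p] (s : ℤ) :
    -1 * casimirEigenvalue p (p - s) = casimirEigenvalue p s := by
  rw [casimirEigenvalue, casimirEigenvalue, q_zpow_sub_add_zpow_neg_sub]
  ring

/-- The power sum `∑ κ ^ j` over the weights `κ` of `K` on `X^+(s) ⊕ X^-(p-s)`, the two simple
modules of a common block. -/
def blockWeightSum (p s j : ℕ) : ℂ :=
  weightSum p 1 s j + weightSum p (-1) (p - s) j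

theorem blockWeightSum_eq [NeZero p] {s : ℕ} (hs : s ≤ p) (j : ℕ) :
    blockWeightSum p s j = (q p ^ ((s : ℤ) - 1)) ^ j * if p ∣ j then (p : ℂ) else 0 := by
  have hq := q_ne_zero p
  have hweight (i : ℕ) :
      -1 * q p ^ (((p - s : ℕ) : ℤ) - 1 - 2 * i) = q p ^ ((s : ℤ) - 1 - 2 * (s + i : ℕ)) := by
    rw [show ((p - s : ℕ) : ℤ) - 1 - 2 * i = s - 1 - 2 * (s + i : ℕ) + p by push_cast [hs]; ring,
      q_zpow_add_self, neg_one_mul, neg_neg]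
  have hpow (i : ℕ) : (q p ^ ((s : ℤ) - 1 - 2 * i)) ^ j =
      (q p ^ ((s : ℤ) - 1)) ^ j * ((q p ^ 2) ^ (-(j : ℤ))) ^ i := by
    rw [zpow_sub₀ hq, div_pow, div_eq_mul_inv, zpow_neg, inv_pow, zpow_natCast, zpow_mul]
    norm_cast
    rw [pow_right_comm]
  calc blockWeightSum p s j
      = ∑ i ∈ Finset.range (s + (p - s)), (q p ^ ((s : ℤ) - 1 - 2 * i)) ^ j := by
        rw [blockWeightSum, weightSum, weightSum, Finset.sum_range_add]
        simp only [one_mul, hweight]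
        rw [← Fin.sum_univ_eq_sum_range, ← Fin.sum_univ_eq_sum_range]
    _ = (q p ^ ((s : ℤ) - 1)) ^ j * if p ∣ j then (p : ℂ) else 0 := by
        simp only [Nat.add_sub_cancel' hs, hpow, ← Finset.mul_sum,
          sum_range_zpow_pow_of_isPrimitiveRoot isPrimitiveRoot_q_sq, dvd_neg,
          Int.natCast_dvd_natCast]

theorem chiOf_add_chiOf_casimir_pow_mul_KK_pow [p.AtLeastTwo] (hX : IsXRep p ρX) {s : ℕ}
    (hs : 1 ≤ s) (hsp : s ≤ p - 1) (n j : ℕ) :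
    chiOf p (ρX 1 s) (casimir p ^ n * KK p ^ j) +
        chiOf p (ρX (-1) (p - s)) (casimir p ^ n * KK p ^ j) =
      casimirEigenvalue p s ^ n * blockWeightSum p s j := by
  rw [hX.chiOf_casimir_pow_mul_KK_pow (.inl rfl) hs (by lia),
    hX.chiOf_casimir_pow_mul_KK_pow (.inr rfl) (by lia) (by lia), Nat.cast_sub (by lia),
    neg_one_mul_casimirEigenvalue_sub, one_mul, blockWeightSum, mul_add]

theorem GOf_casimir_pow_mul_KK_pow [p.AtLeastTwo] (hP : IsPRep p ρP) {s : ℕ}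
    (hs : 1 ≤ s) (hsp : s ≤ p - 1) (n j : ℕ) :
    GOf p ρP s (casimir p ^ n * KK p ^ j) =
      n * casimirEigenvalue p s ^ (n - 1) * blockWeightSum p s j := by
  rw [GOf_eq_traceH_add, LinearMap.add_apply,
    hP.traceH_casimir_pow_mul_KK_pow (.inl rfl) hs hsp,
    hP.traceH_casimir_pow_mul_KK_pow (.inr rfl) (by lia) (by lia), Nat.cast_sub (by lia),
    neg_one_mul_casimirEigenvalue_sub, one_mul, blockWeightSum, mul_add]

theorem eulerDeriv_q_pow [p.AtLeastTwo] (n s : ℕ) :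
    eulerDeriv n (q p ^ s) = ((q p - (q p)⁻¹) ^ 2) ^ n *
      ((q p ^ (s : ℤ) + q p ^ (-(s : ℤ))) * casimirEigenvalue p s ^ n +
        qi p s ^ 2 * (n * casimirEigenvalue p s ^ (n - 1))) := by
  have hd : (q p - (q p)⁻¹) ^ 2 ≠ 0 := pow_ne_zero 2 q_sub_inv_ne_zero
  rw [eulerDeriv, qi_sq, casimirEigenvalue, zpow_neg, zpow_natCast]
  generalize (q p - (q p)⁻¹) ^ 2 = d at hd
  generalize q p ^ s + (q p ^ s)⁻¹ = A
  rcases n with - | n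
  · simp
  · rw [Nat.add_sub_cancel, div_pow, div_pow]
    field_simp
    ring

/-- The right-hand side of the expansion in the GTA basis, grouped by the blocks of `Ū_q`. -/
def gtaExpansion (p : ℕ) (ρX : (α : ℂ) → (s : ℕ) → (Uq p →ₐ[ℂ] Matrix (Fin s) (Fin s) ℂ))
    (ρP : (α : ℂ) → (s : ℕ) → (Uq p →ₐ[ℂ] Matrix (PIdx p s) (PIdx p s) ℂ)) : Uq p →ₗ[ℂ] ℂ :=
  (-1 : ℂ) ^ (p - 1) • chiOf p (ρX 1 p) + chiOf p (ρX (-1) p) +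
    ∑ s ∈ Finset.Icc 1 (p - 1), (-1 : ℂ) ^ s •
      ((q p ^ (s : ℤ) + q p ^ (-(s : ℤ))) • (chiOf p (ρX 1 s) + chiOf p (ρX (-1) (p - s))) +
        qi p s ^ 2 • GOf p ρP s)

theorem gtaExpansion_apply [NeZero p] (u : Uq p) :
    gtaExpansion p ρX ρP u =
      (-1 : ℂ) ^ (p - 1) * chiOf p (ρX 1 p) u + chiOf p (ρX (-1) p) u +
        ∑ s ∈ Finset.Icc 1 (p - 1),
          ((-1 : ℂ) ^ s * (q p ^ (s : ℤ) + q p ^ (-(s : ℤ))) * chiOf p (ρX 1 s) u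
            + (-1 : ℂ) ^ (p - s - 1) * (q p ^ (s : ℤ) + q p ^ (-(s : ℤ)))
                * chiOf p (ρX (-1) s) u
            + (-1 : ℂ) ^ s * (qi p s) ^ 2 * GOf p ρP s u) := by
  have hsign {s : ℕ} (hs : 1 ≤ s) (hsp : s ≤ p - 1) :
      (-1 : ℂ) ^ (p - (p - s) - 1) * (q p ^ ((p - s : ℕ) : ℤ) + q p ^ (-((p - s : ℕ) : ℤ))) =
        (-1) ^ s * (q p ^ (s : ℤ) + q p ^ (-(s : ℤ))) := by
    obtain ⟨t, rfl⟩ := Nat.exists_eq_add_of_le' hs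
    rw [Nat.sub_sub_self (by lia), Nat.add_sub_cancel, Nat.cast_sub (by lia),
      q_zpow_sub_add_zpow_neg_sub, pow_succ]
    ring
  have hreflect : ∑ s ∈ Finset.Icc 1 (p - 1), (-1 : ℂ) ^ (p - s - 1) *
        (q p ^ (s : ℤ) + q p ^ (-(s : ℤ))) * chiOf p (ρX (-1) s) u =
      ∑ s ∈ Finset.Icc 1 (p - 1), (-1) ^ s * (q p ^ (s : ℤ) + q p ^ (-(s : ℤ))) *
        chiOf p (ρX (-1) (p - s)) u := by
    refine (Finset.sum_nbij' (p - ·) (p - ·) ?_ ?_ ?_ ?_ ?_).symm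
    all_goals simp only [Finset.mem_Icc]
    · lia
    · lia
    · lia
    · lia
    · rintro s ⟨hs, hsp⟩
      rw [hsign hs hsp]
  simp only [gtaExpansion, LinearMap.add_apply, LinearMap.smul_apply, LinearMap.sum_apply,
    smul_eq_mul]
  rw [Finset.sum_add_distrib, Finset.sum_add_distrib, hreflect, ← Finset.sum_add_distrib,
    ← Finset.sum_add_distrib]
  congr 1
  refine Finset.sum_congr rfl fun s _ => ?_
  ring

theorem gtaExpansion_mem_kInvariantForms (hP : IsPRep p ρP) :
    gtaExpansion p ρX ρP ∈ kInvariantForms p := by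
  have hG {s : ℕ} (hs : s ∈ Finset.Icc 1 (p - 1)) : GOf p ρP s ∈ kInvariantForms p := by
    rw [Finset.mem_Icc] at hs
    exact add_mem (hP.traceH_mem_kInvariantForms (.inl rfl) hs.1 hs.2)
      (hP.traceH_mem_kInvariantForms (.inr rfl) (by lia) (by lia))
  exact add_mem (add_mem (Submodule.smul_mem _ _ (chiOf_mem_kInvariantForms _))
    (chiOf_mem_kInvariantForms _)) <| Submodule.sum_mem _ fun s hs => Submodule.smul_mem _ _ <|
      add_mem (Submodule.smul_mem _ _ (add_mem (chiOf_mem_kInvariantForms _)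
        (chiOf_mem_kInvariantForms _))) (Submodule.smul_mem _ _ (hG hs))

/-- The value on `C ^ n * K ^ j` of the contribution of the block of `X^+(s)` to `gtaExpansion`,
where `C` is the Casimir element, up to a factor independent of `s`. For `s = 0` and `s = p` it is
twice the contribution of `X^-(p)` and `X^+(p)` respectively. -/
def blockTerm (p n j s : ℕ) : ℂ :=
  (-1) ^ s * (q p ^ ((s : ℤ) - 1)) ^ j * eulerDeriv n (q p ^ s)

theorem two_mul_pow_mul_chiOf_steinberg_neg [p.AtLeastTwo] (hX : IsXRep p ρX) (n j : ℕ) :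
    2 * ((q p - (q p)⁻¹) ^ 2) ^ n * chiOf p (ρX (-1) p) (casimir p ^ n * KK p ^ j) =
      (if p ∣ j then (p : ℂ) else 0) * blockTerm p n j 0 := by
  have hc := neg_one_mul_casimirEigenvalue_sub (p := p) 0
  have hw := blockWeightSum_eq (p := p) p.zero_le j
  have hqi : qi p 0 = 0 := by simp [qi]
  have hsum : q p ^ (0 : ℤ) + q p ^ (-0 : ℤ) = 2 := by norm_num
  rw [sub_zero] at hc
  rw [blockWeightSum, weightSum, Fin.sum_univ_zero, zero_add, Nat.sub_zero] at hw
  rw [hX.chiOf_casimir_pow_mul_KK_pow (.inr rfl) NeZero.one_le le_rfl, hc, hw, blockTerm,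
    eulerDeriv_q_pow, Nat.cast_zero, hqi, hsum]
  ring

theorem two_mul_pow_mul_chiOf_steinberg [p.AtLeastTwo] (hX : IsXRep p ρX) (n j : ℕ) :
    2 * ((q p - (q p)⁻¹) ^ 2) ^ n *
        ((-1) ^ (p - 1) * chiOf p (ρX 1 p) (casimir p ^ n * KK p ^ j)) =
      (if p ∣ j then (p : ℂ) else 0) * blockTerm p n j p := by
  have hw := blockWeightSum_eq (p := p) le_rfl j
  rw [blockWeightSum, Nat.sub_self, weightSum, weightSum, Fin.sum_univ_zero, add_zero,
    ← weightSum] at hw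
  have hqi : qi p p = 0 := by rw [qi, zpow_neg, zpow_natCast, q_pow_self]; norm_num
  have hsum : q p ^ (p : ℤ) + q p ^ (-(p : ℤ)) = -2 := by
    rw [zpow_neg, zpow_natCast, q_pow_self]; norm_num
  have hsign : (-1 : ℂ) ^ p = -(-1) ^ (p - 1) := by
    rw [← pow_sub_one_mul (NeZero.ne p), mul_neg_one]
  rw [hX.chiOf_casimir_pow_mul_KK_pow (.inl rfl) NeZero.one_le le_rfl, one_mul, hw, blockTerm,
    eulerDeriv_q_pow, hqi, hsum, hsign]
  ring

theorem two_mul_pow_mul_gtaExpansion_casimir_pow_mul_KK_pow [p.AtLeastTwo] (hX : IsXRep p ρX)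
    (hP : IsPRep p ρP) (n j : ℕ) :
    2 * ((q p - (q p)⁻¹) ^ 2) ^ n * gtaExpansion p ρX ρP (casimir p ^ n * KK p ^ j) =
      (if p ∣ j then (p : ℂ) else 0) * (blockTerm p n j 0 + blockTerm p n j p +
        2 • ∑ s ∈ Finset.Icc 1 (p - 1), blockTerm p n j s) := by
  have hblock : ∀ s ∈ Finset.Icc 1 (p - 1), ((q p - (q p)⁻¹) ^ 2) ^ n * ((-1) ^ s *
        ((q p ^ (s : ℤ) + q p ^ (-(s : ℤ))) * (chiOf p (ρX 1 s) (casimir p ^ n * KK p ^ j) +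
            chiOf p (ρX (-1) (p - s)) (casimir p ^ n * KK p ^ j)) +
          qi p s ^ 2 * GOf p ρP s (casimir p ^ n * KK p ^ j))) =
      (if p ∣ j then (p : ℂ) else 0) * blockTerm p n j s := by
    intro s hs
    obtain ⟨hs, hsp⟩ := Finset.mem_Icc.1 hs
    rw [chiOf_add_chiOf_casimir_pow_mul_KK_pow hX hs hsp, GOf_casimir_pow_mul_KK_pow hP hs hsp,
      blockWeightSum_eq (by lia), blockTerm, eulerDeriv_q_pow]
    ring
  have hpos := two_mul_pow_mul_chiOf_steinberg hX n j
  have hneg := two_mul_pow_mul_chiOf_steinberg_neg hX n j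
  simp only [gtaExpansion, LinearMap.add_apply, LinearMap.smul_apply, LinearMap.sum_apply,
    smul_eq_mul]
  rw [mul_add, mul_add, hpos, hneg, mul_assoc 2 _ (∑ s ∈ _, _), Finset.mul_sum,
    Finset.sum_congr rfl hblock, ← Finset.mul_sum, nsmul_eq_mul, Nat.cast_two]
  ring

theorem blockTerm_reflect [NeZero p] (n : ℕ) {j s : ℕ} (hj : p ∣ j) (hs : s ≤ 2 * p) :
    blockTerm p n j (2 * p - s) = blockTerm p n j s := by
  have hq := q_ne_zero p
  have hinv : q p ^ (2 * p - s) = (q p ^ s)⁻¹ := by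
    rw [pow_sub₀ _ hq hs, isPrimitiveRoot_q.pow_eq_one, one_mul]
  have hsign : (-1 : ℂ) ^ (2 * p - s) = (-1) ^ s := neg_one_pow_congr (by simp [Nat.even_sub hs])
  have hweight : (q p ^ (((2 * p - s : ℕ) : ℤ) - 1)) ^ j = (q p ^ ((s : ℤ) - 1)) ^ j := by
    have hroot : ((q p ^ 2) ^ ((p : ℤ) - s)) ^ j = 1 := by
      rw [← zpow_natCast, ← zpow_mul, isPrimitiveRoot_q_sq.zpow_eq_one_iff_dvd]
      exact dvd_mul_of_dvd_right (Int.natCast_dvd_natCast.2 hj) _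
    rw [← mul_one ((q p ^ ((s : ℤ) - 1)) ^ j), ← hroot, ← mul_pow, ← zpow_natCast (q p) 2,
      ← zpow_mul, ← zpow_add₀ hq]
    congr 2
    push_cast [hs]
    ring
  rw [blockTerm, blockTerm, hinv, hsign, hweight, eulerDeriv_inv]

theorem sum_range_blockTerm [NeZero p] (n j : ℕ) :
    ∑ s ∈ Finset.range (2 * p), blockTerm p n j s = (q p ^ j)⁻¹ *
      ∑ s ∈ Finset.range (2 * p), (q p ^ ((p + j : ℕ) : ℤ)) ^ s * eulerDeriv n (q p ^ s) := by
  rw [Finset.mul_sum]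
  refine Finset.sum_congr rfl fun s _ => ?_
  rw [blockTerm, zpow_sub_one₀ (q_ne_zero p), mul_pow, zpow_natCast, zpow_natCast, pow_add,
    q_pow_self, mul_pow, pow_right_comm, inv_pow]
  ring

theorem two_mul_dvd_add_of_not_dvd {j : ℕ} (hj : p ∣ j) (h2j : ¬ 2 * p ∣ j) : 2 * p ∣ p + j := by
  obtain ⟨m, rfl⟩ := hj
  obtain ⟨k, rfl⟩ : Odd m := by
    rw [← Nat.not_even_iff_odd, even_iff_two_dvd]
    exact fun h => h2j (mul_comm p m ▸ Nat.mul_dvd_mul_right h p)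
  exact ⟨k + 1, by ring⟩

theorem sum_range_blockTerm_eq [p.AtLeastTwo] {n j : ℕ} (hn : n < p) (hj : p ∣ j) :
    ∑ s ∈ Finset.range (2 * p), blockTerm p n j s =
      if n = p - 1 ∧ 2 * p ∣ j then 4 * (p : ℂ) ^ 2 else 0 := by
  have hp : 2 ≤ p := Nat.AtLeastTwo.prop
  rw [sum_range_blockTerm]
  by_cases h2j : 2 * p ∣ j
  · have hhalf : ((2 * p : ℕ) : ℤ) ∣ (p + j : ℕ) - p := by
      rw [Nat.cast_add, add_sub_cancel_left]
      exact Int.natCast_dvd_natCast.2 h2j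
    rw [sum_range_zpow_mul_eulerDeriv_of_half isPrimitiveRoot_q hhalf hn,
      (isPrimitiveRoot_q.pow_eq_one_iff_dvd j).2 h2j, inv_one, one_mul]
    simp only [h2j, and_true]
  · rw [sum_range_zpow_mul_eulerDeriv_of_dvd isPrimitiveRoot_q
      (Int.natCast_dvd_natCast.2 (two_mul_dvd_add_of_not_dvd hj h2j)) (by lia), mul_zero,
      if_neg fun h => h2j h.2]

theorem gtaExpansion_casimir_pow_mul_KK_pow [p.AtLeastTwo] (hX : IsXRep p ρX)
    (hP : IsPRep p ρP) {n : ℕ} (hn : n < p) (j : ℕ) :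
    gtaExpansion p ρX ρP (casimir p ^ n * KK p ^ j) =
      if n = p - 1 ∧ 2 * p ∣ j then (-1) ^ (p - 1) * (2 * p) * qfact p (p - 1) ^ 2 else 0 := by
  have hd : 2 * ((q p - (q p)⁻¹) ^ 2) ^ n ≠ 0 :=
    mul_ne_zero two_ne_zero (pow_ne_zero _ (pow_ne_zero 2 q_sub_inv_ne_zero))
  refine mul_left_cancel₀ hd ?_
  rw [two_mul_pow_mul_gtaExpansion_casimir_pow_mul_KK_pow hX hP]
  by_cases hj : p ∣ j
  · rw [if_pos hj, ← sum_range_two_mul_of_reflect (NeZero.pos p) _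
      fun s hs => blockTerm_reflect n hj hs, sum_range_blockTerm_eq hn hj]
    split_ifs with h
    · obtain ⟨rfl, -⟩ := h
      linear_combination -4 * p * qfact_sub_one_sq_mul (p := p)
    · rw [mul_zero, mul_zero]
  · rw [if_neg hj, if_neg fun h => hj (dvd_of_mul_left_dvd h.2), zero_mul, mul_zero]

end GTAExpansion

/-- the symmetric linear form `μ(K^{p+1}·)`, where `μ` is the right
integral normalized by `ζ = (-1)^{p-1} 2p ([p-1]!)²`, has the given expansion in the GTA
basis. -/
theorem statement_12 (p : ℕ) (hp : 2 ≤ p)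
    (ρX : (α : ℂ) → (s : ℕ) → (Uq p →ₐ[ℂ] Matrix (Fin s) (Fin s) ℂ))
    (hX : IsXRep p ρX)
    (ρP : (α : ℂ) → (s : ℕ) → (Uq p →ₐ[ℂ] Matrix (PIdx p s) (PIdx p s) ℂ))
    (hP : IsPRep p ρP)
    (Δ : Uq p →ₐ[ℂ] (Uq p ⊗[ℂ] Uq p)) (hΔ : IsCoprod p Δ)
    (μ : Uq p →ₗ[ℂ] ℂ)
    (hμ : ∀ m n j : ℕ, m ≤ p - 1 → n ≤ p - 1 → j ≤ 2 * p - 1 →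
      μ (FF p ^ m * EE p ^ n * KK p ^ j) =
        if m = p - 1 ∧ n = p - 1 ∧ j = p + 1 then
          (-1 : ℂ) ^ (p - 1) * (2 * (p : ℂ)) * (qfact p (p - 1)) ^ 2
        else 0) :
    -- `μ` is a right integral: `(μ ⊗ Id)(Δ(x)) = μ(x) 1`
    (∀ x : Uq p,
      (TensorProduct.lid ℂ (Uq p)) ((TensorProduct.map μ LinearMap.id) (Δ x)) = μ x • 1)
    -- expansion of `μ(K^{p+1}·)` in the GTA basis
    ∧ ∀ u : Uq p,
        μ (KK p ^ (p + 1) * u) =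
          (-1 : ℂ) ^ (p - 1) * chiOf p (ρX 1 p) u + chiOf p (ρX (-1) p) u +
          ∑ s ∈ Finset.Icc 1 (p - 1),
            ((-1 : ℂ) ^ s * (q p ^ (s : ℤ) + q p ^ (-(s : ℤ))) * chiOf p (ρX 1 s) u
              + (-1 : ℂ) ^ (p - s - 1) * (q p ^ (s : ℤ) + q p ^ (-(s : ℤ)))
                  * chiOf p (ρX (-1) s) u
              + (-1 : ℂ) ^ s * (qi p s) ^ 2 * GOf p ρP s u) := by
  have : p.AtLeastTwo := ⟨hp⟩
  have hμ' : IsTopCoordinate p ((-1) ^ (p - 1) * (2 * p) * qfact p (p - 1) ^ 2) μ := hμ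
  refine ⟨hμ'.contractLeft_comul hΔ, fun u => ?_⟩
  rw [← gtaExpansion_apply]
  refine DFunLike.congr_fun (f := μ ∘ₗ LinearMap.mulLeft ℂ (KK p ^ (p + 1)))
    (ext_of_mem_kInvariantForms (comp_mulLeft_KK_pow_mem_kInvariantForms hμ'.mem_kInvariantForms _)
      (gtaExpansion_mem_kInvariantForms hP) fun n hn j => ?_) u
  rw [gtaExpansion_casimir_pow_mul_KK_pow hX hP hn]
  exact hμ'.apply_KK_pow_mul_casimir_pow_mul_KK_pow hn j

end Uqsl2
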